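/- Let H and K be finitely generated subgroups of F(A) with d = rank(K) − rank(H) > 0. Then H is a free factor of K if and only if there exists 0 ≤ d' ≤ d such that Γ_A(H) can be transformed into Γ_A(K) by a sequence of d' i-steps followed by d − d' reduced expansions. -/

import Mathlib

open Function

/-- A letter of the symmetrized alphabet Ã: `(a, true)` stands for `a ∈ A` and
`(a, false)` for `a⁻¹ ∈ A⁻¹`. -/
abbrev Ltr (A : Type) := A × Bool

/-- Inversion of letters of Ã. -/
def Ltr.inv {A : Type} (x : Ltr A) : Ltr A := (x.1, !x.2)

/-- The inverse `u⁻¹` of a word `u` over Ã. -/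
def wordInv {A : Type} (w : List (Ltr A)) : List (Ltr A) := (w.map Ltr.inv).reverse

/-- A word over Ã is reduced iff it has no factor of the form `a a⁻¹` or `a⁻¹ a`. -/
def IsReducedWord {A : Type} (w : List (Ltr A)) : Prop :=
  ∀ (u v : List (Ltr A)) (a : A) (b : Bool), w ≠ u ++ (a, b) :: (a, !b) :: v

/-- An automaton over the symmetrized alphabet Ã, with a bundled state type `Q`,
an initial state `q0` and a set `E` of transitions. -/
structure Autom (A : Type) : Type 1 where
  Q : Type
  q0 : Q
  E : Set (Q × Ltr A × Q)

namespace Autom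

variable {A : Type}

/-- Paths using only transitions in the set `T`. -/
inductive PathOn (M : Autom A) (T : Set (M.Q × Ltr A × M.Q)) :
    M.Q → List (Ltr A) → M.Q → Prop
  | nil (q : M.Q) : PathOn M T q [] q
  | cons {p q r : M.Q} {a : Ltr A} {w : List (Ltr A)} :
      (p, a, q) ∈ T → PathOn M T q w r → PathOn M T p (a :: w) r

/-- `M.Path p u q` : the word `u` labels a path from state `p` to state `q` in `M`. -/
def Path (M : Autom A) : M.Q → List (Ltr A) → M.Q → Prop := M.PathOn M.E

/-- The language L(𝒜) of words labeling a path from `q0` to `q0`. -/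
def lang (M : Autom A) : Set (List (Ltr A)) := {w | M.Path M.q0 w M.q0}

/-- The set L(𝒜)ρ of reductions (in the free group `F(A)`) of words of L(𝒜). -/
def langRho (M : Autom A) : Set (FreeGroup A) := FreeGroup.mk '' M.lang

/-- Dual automaton: `(p,a,q)` is an edge iff `(q,a⁻¹,p)` is one. -/
def Dual (M : Autom A) : Prop := ∀ p a q, (p, a, q) ∈ M.E ↔ (q, Ltr.inv a, p) ∈ M.E

/-- Deterministic automaton. -/
def Deterministic (M : Autom A) : Prop :=
  ∀ p a q q', (p, a, q) ∈ M.E → (p, a, q') ∈ M.E → q = q'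

/-- Trim automaton: every state lies on a path from `q0` to `q0`. -/
def Trim (M : Autom A) : Prop := ∀ q, ∃ u v, M.Path M.q0 u q ∧ M.Path q v M.q0

/-- Inverse automaton: deterministic, trim and dual. -/
def IsInv (M : Autom A) : Prop := M.Deterministic ∧ M.Trim ∧ M.Dual

/-- Reduced automaton: every state lies on a path from `q0` to `q0` labeled by
a reduced word. -/
def IsRed (M : Autom A) : Prop :=
  ∀ q, ∃ u v, IsReducedWord (u ++ v) ∧ M.Path M.q0 u q ∧ M.Path q v M.q0

/-- Homomorphisms of automata. -/
def IsHom (M N : Autom A) (φ : M.Q → N.Q) : Prop :=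
  φ M.q0 = N.q0 ∧ ∀ p a q, (p, a, q) ∈ M.E → (φ p, a, φ q) ∈ N.E

/-- Isomorphism of automata. -/
def Isomorphic (M N : Autom A) : Prop :=
  ∃ φ : M.Q ≃ N.Q, M.IsHom N φ ∧ N.IsHom M φ.symm

/-- `N` is (isomorphic to) the automaton obtained from `M` by identifying the two
states `p` and `q`. -/
def IsIdentification (M : Autom A) (p q : M.Q) (N : Autom A) : Prop :=
  ∃ φ : M.Q → N.Q,
    Surjective φ ∧ φ M.q0 = N.q0 ∧
    (∀ x y, φ x = φ y ↔ x = y ∨ (x = p ∧ y = q) ∨ (x = q ∧ y = p)) ∧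
    (∀ e : N.Q × Ltr A × N.Q, e ∈ N.E ↔ ∃ e' ∈ M.E, e = (φ e'.1, e'.2.1, φ e'.2.2))

/-- `N` is (isomorphic to) the automaton obtained from `M` by deleting the state `q`
and all transitions involving it. -/
def IsDeletion (M : Autom A) (q : M.Q) (N : Autom A) : Prop :=
  ∃ φ : N.Q → M.Q,
    Injective φ ∧ Set.range φ = {x | x ≠ q} ∧ φ N.q0 = M.q0 ∧
    (∀ e : N.Q × Ltr A × N.Q, e ∈ N.E ↔ (φ e.1, e.2.1, φ e.2.2) ∈ M.E)

/-- Elementary reduction of type 1. -/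
def Red1 (M N : Autom A) : Prop :=
  ∃ p q r a, p ≠ q ∧ (r, a, p) ∈ M.E ∧ (r, a, q) ∈ M.E ∧ M.IsIdentification p q N

/-- Elementary reduction of type 2. -/
def Red2 (M N : Autom A) : Prop :=
  ∃ (p q : M.Q) (a : Ltr A), q ≠ M.q0 ∧ (p, a, q) ∈ M.E ∧ (q, Ltr.inv a, p) ∈ M.E ∧
    (∀ e ∈ M.E, e.1 = q ∨ e.2.2 = q → e = (p, a, q) ∨ e = (q, Ltr.inv a, p)) ∧
    M.IsDeletion q N

/-- `N` is (isomorphic to) the reduction `Mρ` of `M`: perform elementary reductions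
of type 1 until the automaton is deterministic, then elementary reductions of type 2
until none is possible. -/
def ReductionOf (M N : Autom A) : Prop :=
  ∃ M₁, Relation.ReflTransGen Red1 M M₁ ∧ M₁.Deterministic ∧
    Relation.ReflTransGen Red2 M₁ N ∧ ∀ N', ¬ Red2 N N'

/-- `N` is (isomorphic to) the expansion of `M` by `(p, w, q)`: a new path labeled `w`
from `p` to `q` (together with its inverse path) whose intermediate states are new. -/
def IsExpansion (M : Autom A) (p : M.Q) (w : List (Ltr A)) (q : M.Q) (N : Autom A) : Prop :=
  w ≠ [] ∧
  ∃ (φ : M.Q → N.Q) (c : Fin (w.length + 1) → N.Q),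
    Injective φ ∧ φ M.q0 = N.q0 ∧ c 0 = φ p ∧ c (Fin.last w.length) = φ q ∧
    (∀ i : Fin (w.length + 1), 0 < (i : ℕ) → (i : ℕ) < w.length → c i ∉ Set.range φ) ∧
    (∀ i j : Fin (w.length + 1), 0 < (i : ℕ) → (i : ℕ) < w.length → c i = c j → i = j) ∧
    (∀ x : N.Q, (∃ y, φ y = x) ∨ ∃ i, c i = x) ∧
    (∀ e : N.Q × Ltr A × N.Q, e ∈ N.E ↔
      ((∃ e' ∈ M.E, e = (φ e'.1, e'.2.1, φ e'.2.2)) ∨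
        ∃ i : Fin w.length,
          e = (c i.castSucc, w.get i, c i.succ) ∨
          e = (c i.succ, Ltr.inv (w.get i), c i.castSucc)))

/-- `M →exp^{(p,w,q)} N` : `N` is (isomorphic to) the reduction of the expansion
of `M` by `(p,w,q)`. -/
def ExpStep (M : Autom A) (p : M.Q) (w : List (Ltr A)) (q : M.Q) (N : Autom A) : Prop :=
  ∃ N' N'', M.IsExpansion p w q N' ∧ ReductionOf N' N'' ∧ Isomorphic N'' N

/-- `M →re^{(p,w,q)} N` : a reduced expansion, i.e. an expansion-then-reduction in which
`M` embeds in `N`. -/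
def REStep (M : Autom A) (p : M.Q) (w : List (Ltr A)) (q : M.Q) (N : Autom A) : Prop :=
  M.ExpStep p w q N ∧ ∃ ψ : M.Q → N.Q, Injective ψ ∧ M.IsHom N ψ

/-- `M →e^{w} N` : an e-step, i.e. `M →exp^{(q0,w,q0)} N`. -/
def EStep (M : Autom A) (w : List (Ltr A)) (N : Autom A) : Prop :=
  M.ExpStep M.q0 w M.q0 N

/-- `M →i^{p=q} N` : an i-step; `N` is (isomorphic to) the reduction of the automaton
obtained from `M` by identifying the distinct states `p` and `q`. -/
def IStep (M : Autom A) (p q : M.Q) (N : Autom A) : Prop :=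
  p ≠ q ∧ ∃ N' N'', M.IsIdentification p q N' ∧ ReductionOf N' N'' ∧ Isomorphic N'' N

/-- i-step, allowing `p = q` (in which case nothing happens). -/
def IStep' (M : Autom A) (p q : M.Q) (N : Autom A) : Prop :=
  (p = q ∧ M.Isomorphic N) ∨ M.IStep p q N

/-- `M →i N` : some i-step applies. -/
def IStepAny (M N : Autom A) : Prop := ∃ p q, M.IStep p q N

/-- Some reduced expansion (by a nonempty reduced word) applies. -/
def REStepAny (M N : Autom A) : Prop :=
  ∃ p w q, IsReducedWord w ∧ M.REStep p w q N

/-- `M` is (isomorphic to) `Γ_A(H)` : a reduced inverse automaton with `L(M)ρ = H`. -/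
def Represents (M : Autom A) (H : Subgroup (FreeGroup A)) : Prop :=
  M.IsInv ∧ M.IsRed ∧ M.langRho = ↑H

/-- The `q0`-diameter of an automaton: the maximum over all states `q` of the minimal
length of a reduced word labeling a path from `q0` to `q`. -/
noncomputable def diam (M : Autom A) : ℕ :=
  ⨆ q : M.Q, sInf {n | ∃ u, IsReducedWord u ∧ u.length = n ∧ M.Path M.q0 u q}

end Autom

/-- `S` is a basis of the subgroup `H`: `S` generates `H` and freely so. -/
def IsFreeBasis {G : Type} [Group G] (S : Set G) (H : Subgroup G) : Prop :=
  Subgroup.closure S = H ∧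
    Injective (FreeGroup.lift (Subtype.val : S → G) : FreeGroup S →* G)

/-- `H ≤ff K` : `H` is a free factor of `K`. -/
def FreeFactor {G : Type} [Group G] (H K : Subgroup G) : Prop :=
  ∃ B C : Set G, IsFreeBasis B H ∧ IsFreeBasis C K ∧ B ⊆ C

/-- The rank of a subgroup: the cardinality of a basis (the common value of
the cardinalities of all bases, when `H` is a finite-rank free group). -/
noncomputable def rk {G : Type} [Group G] (H : Subgroup G) : ℕ :=
  sInf {n | ∃ S : Set G, IsFreeBasis S H ∧ S.ncard = n}

/-- `L` is a graphical free factor of `K` with respect to `A`: `Γ_A(L)` embeds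
in `Γ_A(K)`. -/
def GraphicalFF {A : Type} (L K : Subgroup (FreeGroup A)) : Prop :=
  L ≤ K ∧ ∃ ML MK : Autom A, ML.Represents L ∧ MK.Represents K ∧
    ∃ ψ : ML.Q → MK.Q, Injective ψ ∧ ML.IsHom MK ψ

/-- A step (i-step or reduced expansion) from `M` to `N` of cost `c`. -/
def StepCost {A : Type} (M N : Autom A) (c : ℕ) : Prop :=
  (c = 0 ∧ Autom.IStepAny M N) ∨
  (∃ p w q, IsReducedWord w ∧ w.length = c ∧ M.REStep p w q N)

/-- The well-order `≺` on cost sequences. -/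
def costLT (k l : List ℕ) : Prop :=
  k.length < l.length ∨
  (k.length = l.length ∧ k.sum < l.sum) ∨
  (k.length = l.length ∧ k.sum = l.sum ∧ List.Lex (· < ·) k l)

namespace FFP
open Autom
variable {A : Type}

/-! ### Words -/

theorem Ltr_inv_inv (a : Ltr A) : Ltr.inv (Ltr.inv a) = a := by
  simp [Ltr.inv]

theorem wordInv_eq (w : List (Ltr A)) : wordInv w = FreeGroup.invRev w := rfl

theorem mk_wordInv (w : List (Ltr A)) : FreeGroup.mk (wordInv w) = (FreeGroup.mk w)⁻¹ := by
  rw [wordInv_eq, FreeGroup.inv_mk]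

theorem isReducedWord_iff (w : List (Ltr A)) : IsReducedWord w ↔ FreeGroup.IsReduced w := by
  rw [FreeGroup.isReduced_iff_not_step]
  constructor
  · intro h v hs
    cases hs with
    | not => exact h _ _ _ _ rfl
  · intro h u v a b e
    subst e
    exact h _ FreeGroup.Red.Step.not

theorem mk_eq_of_step (u v : List (Ltr A)) (a : A) (b : Bool) :
    FreeGroup.mk (u ++ (a, b) :: (a, !b) :: v) = FreeGroup.mk (u ++ v) :=
  Quot.sound FreeGroup.Red.Step.not

theorem eq_of_reduced {u v : List (Ltr A)} (hu : IsReducedWord u) (h : FreeGroup.mk u = FreeGroup.mk v) :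
    FreeGroup.Red v u := by
  obtain ⟨z, h1, h2⟩ := FreeGroup.Red.exact.1 h
  rw [isReducedWord_iff] at hu
  rw [hu.red_iff_eq] at h1
  subst h1
  exact h2

/-! ### Paths -/

theorem Path_nil (M : Autom A) (q : M.Q) : M.Path q [] q := PathOn.nil q

theorem Path_nil_iff {M : Autom A} {p q : M.Q} : M.Path p [] q ↔ p = q := by
  constructor
  · intro h; cases h; rfl
  · rintro rfl; exact Path_nil _ _

theorem Path_cons_iff {M : Autom A} {p r : M.Q} {a : Ltr A} {w : List (Ltr A)} :
    M.Path p (a :: w) r ↔ ∃ q, (p, a, q) ∈ M.E ∧ M.Path q w r := by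
  constructor
  · intro h
    cases h with
    | cons h1 h2 => exact ⟨_, h1, h2⟩
  · rintro ⟨q, h1, h2⟩
    exact PathOn.cons h1 h2

theorem Path_append_iff {M : Autom A} {p r : M.Q} {u v : List (Ltr A)} :
    M.Path p (u ++ v) r ↔ ∃ q, M.Path p u q ∧ M.Path q v r := by
  induction u generalizing p with
  | nil => simp [Path_nil_iff]
  | cons a u ih =>
    simp only [List.cons_append, Path_cons_iff, ih]
    constructor
    · rintro ⟨q, h1, s, h2, h3⟩
      exact ⟨s, ⟨q, h1, h2⟩, h3⟩
    · rintro ⟨s, ⟨q, h1, h2⟩, h3⟩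
      exact ⟨q, h1, s, h2, h3⟩

theorem Path_single_iff {M : Autom A} {p r : M.Q} {a : Ltr A} :
    M.Path p [a] r ↔ (p, a, r) ∈ M.E := by
  simp [Path_cons_iff, Path_nil_iff]

theorem Path_append {M : Autom A} {p q r : M.Q} {u v : List (Ltr A)}
    (h : M.Path p u q) (h' : M.Path q v r) : M.Path p (u ++ v) r :=
  Path_append_iff.2 ⟨q, h, h'⟩

theorem wordInv_cons (a : Ltr A) (u : List (Ltr A)) :
    wordInv (a :: u) = wordInv u ++ [Ltr.inv a] := by
  simp [wordInv]

theorem Path_inv {M : Autom A} (hD : M.Dual) {p q : M.Q} {u : List (Ltr A)}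
    (h : M.Path p u q) : M.Path q (wordInv u) p := by
  induction u generalizing p with
  | nil => rw [Path_nil_iff] at h; subst h; exact Path_nil _ _
  | cons a u ih =>
    obtain ⟨s, h1, h2⟩ := Path_cons_iff.1 h
    rw [wordInv_cons]
    exact Path_append (ih h2) (Path_single_iff.2 ((hD _ _ _).1 h1))

theorem Path_map {M N : Autom A} {φ : M.Q → N.Q}
    (hφ : ∀ p a q, (p, a, q) ∈ M.E → (φ p, a, φ q) ∈ N.E) {p q : M.Q}
    {u : List (Ltr A)} (h : M.Path p u q) : N.Path (φ p) u (φ q) := by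
  induction u generalizing p with
  | nil => rw [Path_nil_iff] at h; subst h; exact Path_nil _ _
  | cons a u ih =>
    obtain ⟨s, h1, h2⟩ := Path_cons_iff.1 h
    exact Path_cons_iff.2 ⟨_, hφ _ _ _ h1, ih h2⟩

theorem Path_red {M : Autom A} (hdet : M.Deterministic) (hD : M.Dual) {p q : M.Q}
    {u v : List (Ltr A)} (hr : FreeGroup.Red u v) (h : M.Path p u q) : M.Path p v q := by
  induction hr with
  | refl => exact h
  | tail _ hs ih =>
    cases hs with
    | @not L₁ L₂ x b =>
      obtain ⟨s, h1, h2⟩ := Path_append_iff.1 ih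
      obtain ⟨t, h3, h4⟩ := Path_cons_iff.1 h2
      obtain ⟨t', h5, h6⟩ := Path_cons_iff.1 h4
      have : (t, ((x, !b) : Ltr A), s) ∈ M.E := (hD _ _ _).1 h3
      have := hdet _ _ _ _ this h5
      subst this
      exact Path_append h1 h6

theorem Path_det {M : Autom A} (hdet : M.Deterministic) {p q r : M.Q}
    {u : List (Ltr A)} (h : M.Path p u q) (h' : M.Path p u r) : q = r := by
  induction u generalizing p with
  | nil => rw [Path_nil_iff] at h h'; exact h.symm.trans h'
  | cons a u ih =>
    obtain ⟨s, h1, h2⟩ := Path_cons_iff.1 h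
    obtain ⟨s', h1', h2'⟩ := Path_cons_iff.1 h'
    have := hdet _ _ _ _ h1 h1'
    subst this
    exact ih h2 h2'

theorem Path_mk_det {M : Autom A} (hdet : M.Deterministic) (hD : M.Dual) {p q r : M.Q}
    {u v : List (Ltr A)} (h : M.Path p u q) (h' : M.Path p v r)
    (e : FreeGroup.mk u = FreeGroup.mk v) : q = r := by
  obtain ⟨z, h1, h2⟩ := FreeGroup.Red.exact.1 e
  exact Path_det hdet (Path_red hdet hD h1 h) (Path_red hdet hD h2 h')

/-- Every state can be reached. -/
def Conn (M : Autom A) : Prop := ∀ q, ∃ u, M.Path M.q0 u q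

theorem Conn.trim {M : Autom A} (h : Conn M) (hD : M.Dual) : M.Trim := fun q => by
  obtain ⟨u, hu⟩ := h q
  exact ⟨u, _, hu, Path_inv hD hu⟩

/-- Dual, connected and the language is `L`. -/
structure Rep0 (M : Autom A) (L : Subgroup (FreeGroup A)) : Prop where
  dual : M.Dual
  conn : Conn M
  lang : M.langRho = ↑L

theorem Rep0.of_rep {M : Autom A} {L : Subgroup (FreeGroup A)} (h : M.Represents L) :
    Rep0 M L :=
  ⟨h.1.2.2, fun q => let ⟨u, _, hu, _⟩ := h.1.2.1 q; ⟨u, hu⟩, h.2.2⟩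

theorem Rep0.mem_loop {M : Autom A} {L : Subgroup (FreeGroup A)} (h : Rep0 M L)
    {u : List (Ltr A)} (hu : M.Path M.q0 u M.q0) : FreeGroup.mk u ∈ L := by
  have : FreeGroup.mk u ∈ M.langRho := ⟨u, hu, rfl⟩
  rw [h.lang] at this
  exact this

theorem Rep0.exists_loop {M : Autom A} {L : Subgroup (FreeGroup A)} (h : Rep0 M L)
    {g : FreeGroup A} (hg : g ∈ L) : ∃ u, M.Path M.q0 u M.q0 ∧ FreeGroup.mk u = g := by
  have : g ∈ M.langRho := by rw [h.lang]; exact hg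
  exact this

theorem Rep0.mem_of_paths {M : Autom A} {L : Subgroup (FreeGroup A)} (h : Rep0 M L)
    {u v : List (Ltr A)} {x : M.Q} (hu : M.Path M.q0 u x) (hv : M.Path M.q0 v x) :
    FreeGroup.mk u * (FreeGroup.mk v)⁻¹ ∈ L := by
  rw [← mk_wordInv, FreeGroup.mul_mk]
  exact h.mem_loop (Path_append hu (Path_inv h.dual hv))

/-- Elements labelling paths from the base point. -/
def Pz (M : Autom A) : Set (FreeGroup A) := {g | ∃ u x, M.Path M.q0 u x ∧ FreeGroup.mk u = g}

/-! ### Labellings -/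

theorem label_path {N : Autom A} {X : Type*} [MulAction (FreeGroup A) X] (T : N.Q → X)
    (hT : ∀ p a q, (p, a, q) ∈ N.E → FreeGroup.mk [a] • T q = T p) {p q : N.Q}
    {u : List (Ltr A)} (h : N.Path p u q) : FreeGroup.mk u • T q = T p := by
  induction u generalizing p with
  | nil => rw [Path_nil_iff] at h; subst h; exact one_smul _ _
  | cons a u ih =>
    obtain ⟨s, h1, h2⟩ := Path_cons_iff.1 h
    rw [← hT _ _ _ h1, ← ih h2, smul_smul, FreeGroup.mul_mk]
    rfl

theorem lang_le_of_label {N : Autom A} {L : Subgroup (FreeGroup A)} (T : N.Q → FreeGroup A ⧸ L)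
    (h0 : T N.q0 = ((1 : FreeGroup A) : FreeGroup A ⧸ L))
    (hT : ∀ p a q, (p, a, q) ∈ N.E → FreeGroup.mk [a] • T q = T p) :
    N.langRho ⊆ L := by
  rintro _ ⟨u, hu, rfl⟩
  have := label_path T hT hu
  rw [h0, MulAction.Quotient.smul_coe, smul_eq_mul, mul_one, eq_comm, QuotientGroup.eq] at this
  simpa using this

theorem Rep0.exists_label {M : Autom A} {L L' : Subgroup (FreeGroup A)} (h : Rep0 M L)
    (hL : L ≤ L') : ∃ T : M.Q → FreeGroup A ⧸ L', ∀ x u, M.Path M.q0 u x →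
      T x = (((FreeGroup.mk u)⁻¹ : FreeGroup A) : FreeGroup A ⧸ L') := by
  choose t ht using h.conn
  refine ⟨fun x => (((FreeGroup.mk (t x))⁻¹ : FreeGroup A) : FreeGroup A ⧸ L'), fun x u hu => ?_⟩
  rw [QuotientGroup.eq, inv_inv]
  exact hL (h.mem_of_paths (ht x) hu)

theorem label_edge {M : Autom A} {L L' : Subgroup (FreeGroup A)} (h : Rep0 M L)
    {T : M.Q → FreeGroup A ⧸ L'} (hT : ∀ x u, M.Path M.q0 u x →
      T x = (((FreeGroup.mk u)⁻¹ : FreeGroup A) : FreeGroup A ⧸ L'))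
    {p a q} (he : (p, a, q) ∈ M.E) : FreeGroup.mk [a] • T q = T p := by
  obtain ⟨u, hu⟩ := h.conn p
  rw [hT p u hu, hT q (u ++ [a]) (Path_append hu (Path_single_iff.2 he)), ← FreeGroup.mul_mk,
    MulAction.Quotient.smul_coe, smul_eq_mul]
  congr 1
  group

end FFP

namespace FFP
open Autom
variable {A : Type}

/-- The subgroup defined by a dual automaton. -/
def langSub (M : Autom A) (hD : M.Dual) : Subgroup (FreeGroup A) where
  carrier := M.langRho
  one_mem' := ⟨[], Path_nil _ _, rfl⟩
  mul_mem' := by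
    rintro _ _ ⟨u, hu, rfl⟩ ⟨v, hv, rfl⟩
    exact ⟨u ++ v, Path_append hu hv, FreeGroup.mul_mk.symm⟩
  inv_mem' := by
    rintro _ ⟨u, hu, rfl⟩
    exact ⟨wordInv u, Path_inv hD hu, mk_wordInv u⟩

theorem Rep0.mk' {N : Autom A} {L : Subgroup (FreeGroup A)} {g : FreeGroup A}
    (hD : N.Dual) (hc : Conn N) (h1 : N.langRho ⊆ ↑(L ⊔ Subgroup.zpowers g))
    (h2 : (L : Set (FreeGroup A)) ⊆ N.langRho) (h3 : g ∈ N.langRho) :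
    Rep0 N (L ⊔ Subgroup.zpowers g) := by
  refine ⟨hD, hc, h1.antisymm ?_⟩
  have : L ⊔ Subgroup.zpowers g ≤ langSub N hD := by
    rw [sup_le_iff, Subgroup.zpowers_le]
    exact ⟨h2, h3⟩
  exact this

theorem subset_lang_of_hom {M N : Autom A} {φ : M.Q → N.Q} (h : M.IsHom N φ) :
    M.langRho ⊆ N.langRho := by
  rintro _ ⟨u, hu, rfl⟩
  refine ⟨u, ?_, rfl⟩
  have := Path_map h.2 hu
  rw [h.1] at this
  exact this

theorem ident_rep {M N : Autom A} {L : Subgroup (FreeGroup A)} (hM : Rep0 M L) {p q : M.Q}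
    (hI : M.IsIdentification p q N) {u v : List (Ltr A)} (hu : M.Path M.q0 u p)
    (hv : M.Path M.q0 v q) :
    Rep0 N (L ⊔ Subgroup.zpowers (FreeGroup.mk u * (FreeGroup.mk v)⁻¹)) := by
  obtain ⟨φ, hs, h0, heq, hE⟩ := hI
  have hedge : ∀ p a q, (p, a, q) ∈ M.E → (φ p, a, φ q) ∈ N.E := fun p a q h =>
    (hE _).2 ⟨_, h, rfl⟩
  have hhom : M.IsHom N φ := ⟨h0, hedge⟩
  have hD : N.Dual := by
    have key : ∀ p a q, (p, a, q) ∈ N.E → (q, Ltr.inv a, p) ∈ N.E := by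
      intro p a q h
      obtain ⟨⟨x, b, y⟩, he, e⟩ := (hE _).1 h
      simp only [Prod.mk.injEq] at e
      obtain ⟨rfl, rfl, rfl⟩ := e
      exact hedge _ _ _ ((hM.dual _ _ _).1 he)
    intro p a q
    refine ⟨key p a q, fun h => ?_⟩
    have := key _ _ _ h
    rwa [Ltr_inv_inv] at this
  have hpath : ∀ {x : M.Q} {w}, M.Path M.q0 w x → N.Path N.q0 w (φ x) := by
    intro x w h
    have := Path_map hedge h
    rwa [h0] at this
  set L' := L ⊔ Subgroup.zpowers (FreeGroup.mk u * (FreeGroup.mk v)⁻¹) with hL'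
  have hpq : φ p = φ q := (heq _ _).2 (Or.inr (Or.inl ⟨rfl, rfl⟩))
  refine Rep0.mk' hD ?_ ?_ ?_ ?_
  · intro y
    obtain ⟨x, rfl⟩ := hs y
    obtain ⟨w, hw⟩ := hM.conn x
    exact ⟨w, hpath hw⟩
  · obtain ⟨T, hT⟩ := hM.exists_label (le_sup_left : L ≤ L')
    have hTpq : T p = T q := by
      rw [hT _ _ hu, hT _ _ hv, QuotientGroup.eq, inv_inv]
      exact le_sup_right (a := L) (Subgroup.mem_zpowers _)
    have hφ : ∀ x, T (surjInv hs (φ x)) = T x := by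
      intro x
      rcases (heq _ _).1 (surjInv_eq hs (φ x)) with h | ⟨h1, h2⟩ | ⟨h1, h2⟩
      · rw [h]
      · rw [h1, h2, hTpq]
      · rw [h1, h2, hTpq]
    refine lang_le_of_label (fun y => T (surjInv hs y)) ?_ ?_
    · rw [← h0, hφ, hT _ _ (Path_nil _ _)]
      simp [← FreeGroup.one_eq_mk]
    · intro x a y h
      obtain ⟨⟨x, b, y⟩, he, e⟩ := (hE _).1 h
      simp only [Prod.mk.injEq] at e
      obtain ⟨rfl, rfl, rfl⟩ := e
      simp only [hφ]
      exact label_edge hM hT he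
  · rw [← hM.lang]
    exact subset_lang_of_hom hhom
  · refine ⟨u ++ wordInv v, ?_, by rw [← FreeGroup.mul_mk, mk_wordInv]⟩
    refine Path_append (hpath hu) ?_
    rw [hpq]
    exact Path_inv hD (hpath hv)

theorem red1_rep {M N : Autom A} {L : Subgroup (FreeGroup A)} (hM : Rep0 M L)
    (h : Red1 M N) : Rep0 N L ∧ Pz N ⊆ Pz M := by
  obtain ⟨p, q, r, a, -, hp, hq, hI⟩ := h
  obtain ⟨u, hu⟩ := hM.conn r
  have hN := ident_rep hM hI (Path_append hu (Path_single_iff.2 hp))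
    (Path_append hu (Path_single_iff.2 hq))
  rw [mul_inv_cancel, Subgroup.zpowers_one_eq_bot, sup_bot_eq] at hN
  refine ⟨hN, ?_⟩
  obtain ⟨φ, hs, h0, heq, hE⟩ := hI
  rintro _ ⟨w, y, hw, rfl⟩
  obtain ⟨x, rfl⟩ := hs y
  obtain ⟨v, hv⟩ := hM.conn x
  have hv' : N.Path (φ M.q0) v (φ x) := Path_map (fun p a q h => (hE _).2 ⟨_, h, rfl⟩) hv
  rw [h0] at hv'
  obtain ⟨z, hz, e⟩ := hM.exists_loop (hN.mem_of_paths hw hv')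
  refine ⟨z ++ v, x, Path_append hz hv, ?_⟩
  rw [← FreeGroup.mul_mk, e]
  group

theorem red2_rep {M N : Autom A} {L : Subgroup (FreeGroup A)} (hM : Rep0 M L)
    (h : Red2 M N) : Rep0 N L ∧ Pz N ⊆ Pz M := by
  obtain ⟨p, q, a, hq0, hpq, hqp, hleaf, φ, hinj, hrange, h0, hE⟩ := h
  have hmem : ∀ x, x ≠ q → ∃ y, φ y = x := fun x hx => by
    have : x ∈ Set.range φ := by rw [hrange]; exact hx
    exact this
  have hne : ∀ y, φ y ≠ q := fun y => by
    have : φ y ∈ Set.range φ := ⟨y, rfl⟩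
    rw [hrange] at this; exact this
  have hedge : ∀ p a q, (p, a, q) ∈ N.E → (φ p, a, φ q) ∈ M.E := fun p a q h => (hE _).1 h
  have hD : N.Dual := by
    intro x b y
    rw [hE, hE]
    exact hM.dual _ _ _
  -- `p ≠ q`
  have hpneq : p ≠ q := by
    rintro rfl
    obtain ⟨u, hu⟩ := hM.conn p
    have : ∀ (w : List (Ltr A)) (x : M.Q), x ≠ p → ¬ M.Path x w p := by
      intro w
      induction w with
      | nil => intro x hx h; exact hx (Path_nil_iff.1 h)
      | cons b w ih =>
        intro x hx h
        obtain ⟨s, h1, h2⟩ := Path_cons_iff.1 h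
        by_cases hs : s = p
        · subst hs
          rcases hleaf _ h1 (Or.inr rfl) with e | e
          · exact hx (congrArg Prod.fst e)
          · exact hx (congrArg Prod.fst e)
        · exact ih s hs h2
    exact this u _ (Ne.symm hq0) hu
  obtain ⟨p', hp'⟩ := hmem p hpneq
  have key : ∀ (w : List (Ltr A)) (y : N.Q),
      (∀ x, M.Path (φ x) w (φ y) → ∃ w', N.Path x w' y ∧ FreeGroup.mk w' = FreeGroup.mk w) ∧
      (M.Path q w (φ y) → ∃ w', N.Path p' w' y ∧
        FreeGroup.mk w' = FreeGroup.mk [a] * FreeGroup.mk w) := by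
    intro w y
    induction w with
    | nil =>
      refine ⟨fun x h => ?_, fun h => ?_⟩
      · have := hinj (Path_nil_iff.1 h)
        subst this
        exact ⟨[], Path_nil _ _, rfl⟩
      · exact absurd (Path_nil_iff.1 h).symm (hne y)
    | cons b w ih =>
      refine ⟨fun x h => ?_, fun h => ?_⟩
      · obtain ⟨s, h1, h2⟩ := Path_cons_iff.1 h
        by_cases hs : s = q
        · subst hs
          rcases hleaf _ h1 (Or.inr rfl) with e | e
          · simp only [Prod.mk.injEq] at e
            obtain ⟨e1, rfl, -⟩ := e
            obtain ⟨w', hw', e'⟩ := ih.2 h2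
            have : x = p' := hinj (e1.trans hp'.symm)
            subst this
            refine ⟨w', hw', ?_⟩
            rw [e', FreeGroup.mul_mk]; rfl
          · exact absurd (congrArg Prod.fst e) (hne x)
        · obtain ⟨t, rfl⟩ := hmem s hs
          obtain ⟨w', hw', e'⟩ := ih.1 t h2
          refine ⟨b :: w', Path_cons_iff.2 ⟨t, (hE _).2 h1, hw'⟩, ?_⟩
          rw [← List.singleton_append, ← FreeGroup.mul_mk, e', FreeGroup.mul_mk]; rfl
      · obtain ⟨s, h1, h2⟩ := Path_cons_iff.1 h
        rcases hleaf _ h1 (Or.inl rfl) with e | e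
        · exact absurd (congrArg Prod.fst e).symm hpneq
        · simp only [Prod.mk.injEq, true_and] at e
          obtain ⟨rfl, rfl⟩ := e
          rw [← hp'] at h2
          obtain ⟨w', hw', e'⟩ := ih.1 _ h2
          refine ⟨w', hw', ?_⟩
          rw [e', FreeGroup.mul_mk]
          exact (mk_eq_of_step [] w a.1 a.2).symm
  refine ⟨⟨hD, ?_, ?_⟩, ?_⟩
  · intro y
    obtain ⟨u, hu⟩ := hM.conn (φ y)
    rw [← h0] at hu
    obtain ⟨w', hw', -⟩ := (key u y).1 _ hu
    exact ⟨w', hw'⟩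
  · rw [← hM.lang]
    refine (subset_lang_of_hom ⟨h0, hedge⟩).antisymm ?_
    rintro _ ⟨u, hu, rfl⟩
    have hu : M.Path M.q0 u M.q0 := hu
    rw [← h0] at hu
    obtain ⟨w', hw', e⟩ := (key u _).1 _ hu
    exact ⟨w', hw', e⟩
  · rintro _ ⟨w, y, hw, rfl⟩
    have := Path_map hedge hw
    rw [h0] at this
    exact ⟨w, _, this, rfl⟩

theorem reduction_rep {M N : Autom A} {L : Subgroup (FreeGroup A)} (hM : Rep0 M L)
    (h : ReductionOf M N) : Rep0 N L ∧ Pz N ⊆ Pz M := by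
  obtain ⟨M₁, h1, -, h2, -⟩ := h
  have a1 : Rep0 M₁ L ∧ Pz M₁ ⊆ Pz M := by
    clear h2
    induction h1 with
    | refl => exact ⟨hM, subset_rfl⟩
    | tail _ hs ih =>
      obtain ⟨b1, b2⟩ := red1_rep ih.1 hs
      exact ⟨b1, b2.trans ih.2⟩
  induction h2 with
  | refl => exact a1
  | tail _ hs ih =>
    obtain ⟨b1, b2⟩ := red2_rep ih.1 hs
    exact ⟨b1, b2.trans ih.2⟩

theorem iso_rep {M N : Autom A} {L : Subgroup (FreeGroup A)} (hM : Rep0 M L)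
    (h : Isomorphic M N) : Rep0 N L := by
  obtain ⟨φ, h1, h2⟩ := h
  refine ⟨?_, ?_, ?_⟩
  · have : ∀ x b y, (x, b, y) ∈ N.E ↔ (φ.symm x, b, φ.symm y) ∈ M.E := by
      intro x b y
      refine ⟨h2.2 _ _ _, fun h => ?_⟩
      have := h1.2 _ _ _ h
      simpa using this
    intro x b y
    rw [this, this]
    exact hM.dual _ _ _
  · intro y
    obtain ⟨u, hu⟩ := hM.conn (φ.symm y)
    have := Path_map h1.2 hu
    rw [h1.1] at this
    exact ⟨u, by simpa using this⟩
  · rw [← hM.lang]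
    exact (subset_lang_of_hom h2).antisymm (subset_lang_of_hom h1)

theorem exp_rep {M N : Autom A} {L : Subgroup (FreeGroup A)} (hM : Rep0 M L) {p q : M.Q}
    {w : List (Ltr A)}
    (hI : M.IsExpansion p w q N) {u v : List (Ltr A)} (hu : M.Path M.q0 u p)
    (hv : M.Path M.q0 v q) :
    Rep0 N (L ⊔ Subgroup.zpowers (FreeGroup.mk u * FreeGroup.mk w * (FreeGroup.mk v)⁻¹)) ∧
    ∀ g ∈ Pz N, ∃ h ∈ L ⊔ Subgroup.zpowers (FreeGroup.mk u * FreeGroup.mk w * (FreeGroup.mk v)⁻¹),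
      (∃ x ∈ Pz M, g = h * x) ∨ ∃ i, g = h * (FreeGroup.mk u * FreeGroup.mk (w.take i)) := by
  obtain ⟨hw, φ, c, hinj, h0, hc0, hcl, hnr, huniq, hcov, hE⟩ := hI
  have hedge : ∀ p a q, (p, a, q) ∈ M.E → (φ p, a, φ q) ∈ N.E := fun p a q h =>
    (hE _).2 (Or.inl ⟨_, h, rfl⟩)
  have hhom : M.IsHom N φ := ⟨h0, hedge⟩
  have hD : N.Dual := by
    have key : ∀ p a q, (p, a, q) ∈ N.E → (q, Ltr.inv a, p) ∈ N.E := by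
      intro p a q h
      rcases (hE _).1 h with ⟨⟨x, b, y⟩, he, e⟩ | ⟨i, e | e⟩
      · simp only [Prod.mk.injEq] at e
        obtain ⟨rfl, rfl, rfl⟩ := e
        exact hedge _ _ _ ((hM.dual _ _ _).1 he)
      · simp only [Prod.mk.injEq] at e
        obtain ⟨rfl, rfl, rfl⟩ := e
        exact (hE _).2 (Or.inr ⟨i, Or.inr rfl⟩)
      · simp only [Prod.mk.injEq] at e
        obtain ⟨rfl, rfl, rfl⟩ := e
        exact (hE _).2 (Or.inr ⟨i, Or.inl (by rw [Ltr_inv_inv])⟩)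
    intro p a q
    refine ⟨key p a q, fun h => ?_⟩
    have := key _ _ _ h
    rwa [Ltr_inv_inv] at this
  have hpath : ∀ {x : M.Q} {w}, M.Path M.q0 w x → N.Path N.q0 w (φ x) := by
    intro x w h
    have := Path_map hedge h
    rwa [h0] at this
  have hcp : ∀ (n : ℕ) (hn : n < w.length + 1), N.Path (c 0) (w.take n) (c ⟨n, hn⟩) := by
    intro n
    induction n with
    | zero => intro hn; exact Path_nil _ _
    | succ n ih =>
      intro hn
      have hn' : n < w.length := by omega
      rw [← List.take_concat_get' w n hn']
      refine Path_append (ih (by omega)) (Path_single_iff.2 ?_)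
      exact (hE _).2 (Or.inr ⟨⟨n, hn'⟩, Or.inl rfl⟩)
  have hcp' : ∀ i : Fin (w.length + 1), N.Path N.q0 (u ++ w.take i) (c i) := fun i => by
    have := hcp i i.2
    rw [hc0] at this
    exact Path_append (hpath hu) this
  set L' := L ⊔ Subgroup.zpowers (FreeGroup.mk u * FreeGroup.mk w * (FreeGroup.mk v)⁻¹) with hL'
  have hrep : Rep0 N L' := by
    refine Rep0.mk' hD ?_ ?_ ?_ ?_
    · intro y
      rcases hcov y with ⟨x, rfl⟩ | ⟨i, rfl⟩
      · obtain ⟨w, hw⟩ := hM.conn x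
        exact ⟨w, hpath hw⟩
      · exact ⟨_, hcp' i⟩
    · obtain ⟨T, hT⟩ := hM.exists_label (le_sup_left : L ≤ L')
      have hex : ∃ T' : N.Q → FreeGroup A ⧸ L', (∀ x, T' (φ x) = T x) ∧ ∀ i, T' (c i) =
          (((FreeGroup.mk (u ++ w.take i))⁻¹ : FreeGroup A) : FreeGroup A ⧸ L') := by
        classical
        have : ∀ y : N.Q, ∃ t : FreeGroup A ⧸ L', (∀ x, φ x = y → t = T x) ∧
            ∀ i, c i = y → t =
              (((FreeGroup.mk (u ++ w.take i))⁻¹ : FreeGroup A) : FreeGroup A ⧸ L') := by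
          intro y
          rcases em (∃ x, φ x = y) with ⟨x, rfl⟩ | hy
          · refine ⟨T x, fun x' hx' => by rw [hinj hx'], fun i hi => ?_⟩
            by_cases hi0 : (i : ℕ) = 0
            · have : i = 0 := Fin.ext hi0
              subst this
              rw [hc0] at hi
              have := hinj hi
              subst this
              rw [hT _ _ hu]
              simp only [Fin.val_zero, List.take_zero, List.append_nil]
              rfl
            · by_cases hil : (i : ℕ) < w.length
              · exact absurd ⟨x, hi.symm⟩ (hnr i (by omega) hil)
              · have : i = Fin.last _ := Fin.ext (by simp; omega)
                subst this
                rw [hcl] at hi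
                have := hinj hi
                subst this
                rw [hT _ _ hv, QuotientGroup.eq, inv_inv, ← inv_mem_iff]
                have : FreeGroup.mk u * FreeGroup.mk w * (FreeGroup.mk v)⁻¹ ∈ L' :=
                  le_sup_right (a := L) (Subgroup.mem_zpowers _)
                rw [Fin.val_last, List.take_length, mul_inv_rev, inv_inv, ← FreeGroup.mul_mk]
                exact this
          · rcases hcov y with h | ⟨i, rfl⟩
            · exact absurd h hy
            · refine ⟨(((FreeGroup.mk (u ++ w.take i))⁻¹ : FreeGroup A) : FreeGroup A ⧸ L'),
                fun x hx => absurd ⟨x, hx⟩ hy, fun j hj => ?_⟩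
              have hi0 : 0 < (i : ℕ) := by
                rw [Nat.pos_iff_ne_zero]
                intro hi
                have : i = 0 := Fin.ext hi
                subst this
                exact hy ⟨_, hc0.symm⟩
              have hil : (i : ℕ) < w.length := by
                by_contra hil
                have : i = Fin.last _ := Fin.ext (by simp; omega)
                subst this
                exact hy ⟨_, hcl.symm⟩
              have := huniq i j hi0 hil hj.symm
              subst this
              rfl
        choose T' hT'1 hT'2 using this
        exact ⟨T', fun x => hT'1 _ x rfl, fun i => hT'2 _ i rfl⟩
      obtain ⟨T', hT1, hT2⟩ := hex
      have hstep : ∀ i : Fin w.length, FreeGroup.mk [w.get i] • T' (c i.succ) = T' (c i.castSucc) := by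
        intro i
        rw [hT2, hT2, MulAction.Quotient.smul_coe, smul_eq_mul]
        congr 1
        have : w.take (i.succ : Fin _) = w.take (i.castSucc : Fin _) ++ [w.get i] := by
          simp
        rw [this, ← List.append_assoc, ← FreeGroup.mul_mk (L₂ := [w.get i])]
        group
      refine lang_le_of_label T' ?_ ?_
      · rw [← h0, hT1, hT _ _ (Path_nil _ _)]
        simp [← FreeGroup.one_eq_mk]
      · intro x a y h
        rcases (hE _).1 h with ⟨⟨x, b, y⟩, he, e⟩ | ⟨i, e | e⟩
        · simp only [Prod.mk.injEq] at e
          obtain ⟨rfl, rfl, rfl⟩ := e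
          rw [hT1, hT1]
          exact label_edge hM hT he
        · simp only [Prod.mk.injEq] at e
          obtain ⟨rfl, rfl, rfl⟩ := e
          exact hstep i
        · simp only [Prod.mk.injEq] at e
          obtain ⟨rfl, rfl, rfl⟩ := e
          rw [← hstep i, smul_smul]
          have : FreeGroup.mk [Ltr.inv (w.get i)] * FreeGroup.mk [w.get i] = 1 := by
            have : FreeGroup.mk [Ltr.inv (w.get i)] = (FreeGroup.mk [w.get i])⁻¹ := by
              rw [← mk_wordInv]; rfl
            rw [this, inv_mul_cancel]
          rw [this, one_smul]
    · rw [← hM.lang]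
      exact subset_lang_of_hom hhom
    · refine ⟨u ++ w ++ wordInv v, ?_, by
        rw [← FreeGroup.mul_mk, ← FreeGroup.mul_mk, mk_wordInv]⟩
      have := hcp' (Fin.last _)
      rw [hcl] at this
      simp only [Fin.val_last, List.take_length] at this
      exact Path_append this (Path_inv hD (hpath hv))
  refine ⟨hrep, ?_⟩
  rintro _ ⟨z, y, hz, rfl⟩
  rcases hcov y with ⟨x, rfl⟩ | ⟨i, rfl⟩
  · obtain ⟨t, ht⟩ := hM.conn x
    exact ⟨_, hrep.mem_of_paths hz (hpath ht), Or.inl ⟨FreeGroup.mk t, ⟨t, x, ht, rfl⟩, by group⟩⟩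
  · exact ⟨_, hrep.mem_of_paths hz (hcp' i), Or.inr ⟨i, by rw [FreeGroup.mul_mk]; group⟩⟩

end FFP

namespace FFP
open Autom
variable {A : Type}

theorem exists_ident (M : Autom A) (p q : M.Q) (hpq : p ≠ q) [Finite M.Q] :
    ∃ N : Autom A, M.IsIdentification p q N ∧ Finite N.Q ∧ Nat.card N.Q < Nat.card M.Q := by
  classical
  let φ : M.Q → {x : M.Q // x ≠ q} := fun x => if h : x = q then ⟨p, hpq⟩ else ⟨x, h⟩
  have hφ : ∀ x y, φ x = φ y ↔ x = y ∨ (x = p ∧ y = q) ∨ (x = q ∧ y = p) := by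
    intro x y
    by_cases hx : x = q
    · by_cases hy : y = q
      · simp [φ, hx, hy]
      · simp only [φ, hx, hy, dif_pos, dif_neg, not_false_eq_true, Subtype.mk.injEq]
        constructor
        · intro h; exact Or.inr (Or.inr ⟨trivial, h.symm⟩)
        · rintro (h | ⟨h1, h2⟩ | ⟨h1, h2⟩)
          · exact absurd h.symm hy
          · exact h2.elim
          · exact h2.symm
    · by_cases hy : y = q
      · simp only [φ, hx, hy, dif_pos, dif_neg, not_false_eq_true, Subtype.mk.injEq]
        constructor
        · intro h; exact Or.inr (Or.inl ⟨h, trivial⟩)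
        · rintro (h | ⟨h1, h2⟩ | ⟨h1, h2⟩)
          · exact h.elim
          · exact h1
          · exact h1.elim
      · simp [φ, hx, hy]
  have hs : Surjective φ := by
    rintro ⟨x, hx⟩
    exact ⟨x, by simp [φ, hx]⟩
  let N : Autom A := ⟨{x : M.Q // x ≠ q}, φ M.q0, {e | ∃ e' ∈ M.E, e = (φ e'.1, e'.2.1, φ e'.2.2)}⟩
  refine ⟨N, ⟨φ, hs, rfl, hφ, fun e => Iff.rfl⟩, ?_, ?_⟩
  · exact inferInstanceAs (Finite {x : M.Q // x ≠ q})
  · exact Finite.card_subtype_lt (p := fun x => x ≠ q) (x := q) (by simp)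

theorem exists_del (M : Autom A) (q : M.Q) (hq : q ≠ M.q0) [Finite M.Q] :
    ∃ N : Autom A, M.IsDeletion q N ∧ Finite N.Q ∧ Nat.card N.Q < Nat.card M.Q := by
  refine ⟨⟨{x : M.Q // x ≠ q}, ⟨M.q0, hq.symm⟩, {e | (e.1.1, e.2.1, e.2.2.1) ∈ M.E}⟩,
    ⟨Subtype.val, Subtype.val_injective, ?_, rfl, fun e => Iff.rfl⟩, ?_, ?_⟩
  · exact Subtype.range_val
  · exact inferInstanceAs (Finite {x : M.Q // x ≠ q})
  · exact Finite.card_subtype_lt (p := fun x => x ≠ q) (x := q) (by simp)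

theorem exists_red1 (n : ℕ) : ∀ (M : Autom A), Finite M.Q → Nat.card M.Q = n →
    ∃ N, Relation.ReflTransGen Red1 M N ∧ N.Deterministic ∧ Finite N.Q := by
  induction n using Nat.strong_induction_on with
  | _ n ih =>
    intro M hf hn
    by_cases hd : M.Deterministic
    · exact ⟨M, .refl, hd, hf⟩
    · simp only [Deterministic, not_forall] at hd
      obtain ⟨r, a, p, q, h1, h2, hpq⟩ := hd
      obtain ⟨N, hN, hfN, hc⟩ := exists_ident M p q hpq
      obtain ⟨N', h3, h4, h5⟩ := ih _ (hn ▸ hc) N hfN rfl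
      exact ⟨N', .head ⟨p, q, r, a, hpq, h1, h2, hN⟩ h3, h4, h5⟩

theorem red2_det {M N : Autom A} (h : Red2 M N) (hM : M.Deterministic) : N.Deterministic := by
  obtain ⟨p, q, a, -, -, -, -, φ, hinj, -, -, hE⟩ := h
  intro p a q q' h1 h2
  exact hinj (hM _ _ _ _ ((hE _).1 h1) ((hE _).1 h2))

theorem exists_red2 (n : ℕ) : ∀ (M : Autom A), Finite M.Q → M.Deterministic → Nat.card M.Q = n →
    ∃ N, Relation.ReflTransGen Red2 M N ∧ N.Deterministic ∧ Finite N.Q ∧ ∀ N', ¬ Red2 N N' := by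
  induction n using Nat.strong_induction_on with
  | _ n ih =>
    intro M hf hd hn
    by_cases hr : ∃ N, Red2 M N
    · obtain ⟨N₀, hr⟩ := hr
      obtain ⟨p, q, a, h1, h2, h3, h4, -⟩ := hr
      obtain ⟨N, hN, hfN, hc⟩ := exists_del M q h1
      have hr : Red2 M N := ⟨p, q, a, h1, h2, h3, h4, hN⟩
      obtain ⟨N', h3, h4, h5, h6⟩ := ih _ (hn ▸ hc) N hfN (red2_det hr hd) rfl
      exact ⟨N', .head hr h3, h4, h5, h6⟩
    · exact ⟨M, .refl, hd, hf, fun N' h => hr ⟨N', h⟩⟩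

theorem reduced_append_cons {u v : List (Ltr A)} {a b : Ltr A}
    (h1 : IsReducedWord (u ++ [a])) (h2 : IsReducedWord (b :: v)) (h : b ≠ Ltr.inv a) :
    IsReducedWord (u ++ [a] ++ b :: v) := by
  rw [isReducedWord_iff] at *
  have h3 : FreeGroup.IsReduced ([a] ++ b :: v) := by
    refine FreeGroup.isReduced_cons_cons.2 ⟨fun e => ?_, h2⟩
    by_contra hne
    apply h
    obtain ⟨a1, a2⟩ := a
    obtain ⟨b1, b2⟩ := b
    simp only at e hne
    simp only [Ltr.inv, e, Prod.mk.injEq, true_and]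
    cases a2 <;> cases b2 <;> simp_all
  exact FreeGroup.IsReduced.append_overlap h1 h3 (by simp)

theorem reduced_wordInv {u : List (Ltr A)} (h : IsReducedWord u) : IsReducedWord (wordInv u) := by
  rw [isReducedWord_iff, FreeGroup.isReduced_iff_not_step] at *
  intro v hv
  rw [wordInv_eq] at hv
  have := hv.invRev
  rw [FreeGroup.invRev_invRev] at this
  exact h _ this

theorem reduced_infix_word {u v : List (Ltr A)} (h : IsReducedWord u) (h' : v <:+: u) :
    IsReducedWord v := by
  rw [isReducedWord_iff] at *
  obtain ⟨s, t, rfl⟩ := h'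
  exact List.IsChain.right_of_append (List.IsChain.left_of_append h)

theorem wordInv_append (u v : List (Ltr A)) : wordInv (u ++ v) = wordInv v ++ wordInv u := by
  simp [wordInv]

theorem exists_reduced_path {M : Autom A} (hdet : M.Deterministic) (hD : M.Dual) {p q : M.Q}
    {u : List (Ltr A)} (h : M.Path p u q) :
    ∃ v, IsReducedWord v ∧ M.Path p v q ∧ v.length ≤ u.length ∧ FreeGroup.mk v = FreeGroup.mk u := by
  classical
  refine ⟨FreeGroup.reduce u, ?_, Path_red hdet hD FreeGroup.reduce.red h,
    FreeGroup.Red.length_le FreeGroup.reduce.red, FreeGroup.reduce.self⟩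
  rw [isReducedWord_iff]
  exact FreeGroup.IsReduced.of_reduce_eq FreeGroup.reduce.idem

theorem isRed_of_no_red2 {M : Autom A} (hf : Finite M.Q) (hdet : M.Deterministic) (hD : M.Dual)
    (hc : Conn M) (hno : ∀ N, ¬ Red2 M N) : M.IsRed := by
  classical
  have hshort : ∀ q, ∃ u, (IsReducedWord u ∧ M.Path M.q0 u q) ∧
      ∀ v, M.Path M.q0 v q → u.length ≤ v.length := by
    intro q
    have hex : ∃ n, ∃ u, M.Path M.q0 u q ∧ u.length = n := by
      obtain ⟨u, hu⟩ := hc q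
      exact ⟨_, u, hu, rfl⟩
    obtain ⟨u, hu, hl⟩ := Nat.find_spec hex
    obtain ⟨v, hv, hv', hle, -⟩ := exists_reduced_path hdet hD hu
    refine ⟨v, ⟨hv, hv'⟩, fun z hz => ?_⟩
    have := Nat.find_min' hex ⟨z, hz, rfl⟩
    omega
  choose t ht hmin using hshort
  let C : Set M.Q := {q | ∃ u v, IsReducedWord (u ++ v) ∧ M.Path M.q0 u q ∧ M.Path q v M.q0}
  by_contra hcon
  have hne : (Cᶜ).Nonempty := by
    by_contra h
    rw [Set.not_nonempty_iff_eq_empty, Set.compl_empty_iff] at h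
    exact hcon fun q => (h ▸ Set.mem_univ q : q ∈ C)
  obtain ⟨q, hq, hmax⟩ := Set.exists_max_image (Cᶜ) (fun q => (t q).length) (Set.toFinite _) hne
  have hq0 : q ≠ M.q0 := by
    rintro rfl
    exact hq ⟨[], [], by rw [isReducedWord_iff]; exact FreeGroup.IsReduced.nil, Path_nil _ _, Path_nil _ _⟩
  have htq : t q ≠ [] := by
    intro h
    have := (ht q).2
    rw [h] at this
    exact hq0 (Path_nil_iff.1 this).symm
  obtain ⟨s, a, hsa⟩ : ∃ s a, t q = s ++ [a] :=
    ⟨_, _, (List.dropLast_append_getLast htq).symm⟩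
  have hpq := (ht q).2
  rw [hsa] at hpq
  obtain ⟨r, hr, hra⟩ := Path_append_iff.1 hpq
  rw [Path_single_iff] at hra
  obtain ⟨N, hN, -, -⟩ := exists_del M q hq0
  have hnl : ¬ ∀ e ∈ M.E, e.1 = q ∨ e.2.2 = q → e = (r, a, q) ∨ e = (q, Ltr.inv a, r) := fun h =>
    hno N ⟨r, q, a, hq0, hra, (hD _ _ _).1 hra, h, hN⟩
  -- another outgoing edge
  obtain ⟨b, y, hb, hba⟩ : ∃ b y, (q, b, y) ∈ M.E ∧ b ≠ Ltr.inv a := by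
    by_contra hcon
    push Not at hcon
    apply hnl
    rintro ⟨x, b, y⟩ he (h | h)
    · simp only at h
      subst h
      have hb := hcon b y he
      subst hb
      right
      rw [hdet _ _ _ _ he ((hD _ _ _).1 hra)]
    · simp only at h
      subst h
      have he' := (hD _ _ _).1 he
      have hb := hcon _ _ he'
      left
      have hxr := hdet _ _ _ _ (hb ▸ he') ((hD _ _ _).1 hra)
      have : b = a := by
        rw [← Ltr_inv_inv b, hb, Ltr_inv_inv]
      rw [hxr, this]
  have hrq := (ht q).1
  have hpq := (ht q).2
  have hqb : IsReducedWord (t q ++ [b]) := by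
    have := hrq
    rw [hsa] at this ⊢
    exact reduced_append_cons this (by rw [isReducedWord_iff]; exact FreeGroup.IsReduced.singleton) hba
  by_cases hy : y ∈ C
  · obtain ⟨u, v, huv, hu, hv⟩ := hy
    cases v with
    | nil =>
      rw [Path_nil_iff] at hv
      exact hq ⟨t q, [b], hqb, hpq, by rw [← hv]; exact Path_single_iff.2 hb⟩
    | cons c v =>
      by_cases hcb : c = Ltr.inv b
      · subst hcb
        obtain ⟨q', h1, h2⟩ := Path_cons_iff.1 hv
        have := hdet _ _ _ _ h1 ((hD _ _ _).1 hb)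
        subst this
        exact hq ⟨u ++ [Ltr.inv b], v, by simpa using huv, Path_append hu (Path_single_iff.2 h1), h2⟩
      · refine hq ⟨t q, b :: c :: v, ?_, hpq, Path_cons_iff.2 ⟨y, hb, hv⟩⟩
        have := reduced_append_cons hqb (reduced_infix_word (v := c :: v) huv ⟨u, [], by simp⟩) hcb
        simpa using this
  · have hle := hmax y hy
    rcases List.eq_nil_or_concat (t y) with h | ⟨z, c, h⟩
    · have := (ht y).2
      rw [h, Path_nil_iff] at this
      exact hq ⟨t q, [b], hqb, hpq, by rw [this]; exact Path_single_iff.2 hb⟩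
    · have hty := (ht y).2
      have hry := (ht y).1
      rw [List.concat_eq_append] at h
      rw [h] at hty hry
      by_cases hcb : c = b
      · subst hcb
        obtain ⟨q', h1, h2⟩ := Path_append_iff.1 hty
        rw [Path_single_iff] at h2
        have := hdet _ _ _ _ ((hD _ _ _).1 h2) ((hD _ _ _).1 hb)
        subst this
        have := hmin q' z h1
        rw [h] at hle
        simp at hle
        omega
      · have hinv : wordInv (t y) = Ltr.inv c :: wordInv z := by
          rw [h, wordInv_append]; rfl
        refine hq ⟨t q, b :: wordInv (t y), ?_, hpq,
          Path_cons_iff.2 ⟨y, hb, Path_inv hD (ht y).2⟩⟩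
        have h3 := reduced_wordInv (ht y).1
        rw [hinv] at h3
        have := reduced_append_cons hqb h3 (by
          intro e
          apply hcb
          rw [← Ltr_inv_inv c, e, Ltr_inv_inv])
        rw [hinv]
        simpa using this

theorem exists_reduction {M : Autom A} {L : Subgroup (FreeGroup A)} (hf : Finite M.Q)
    (hM : Rep0 M L) : ∃ N, ReductionOf M N ∧ Finite N.Q ∧ N.Represents L ∧ Pz N ⊆ Pz M := by
  obtain ⟨M₁, h1, h2, h3⟩ := exists_red1 _ M hf rfl
  obtain ⟨N, h4, h5, h6, h7⟩ := exists_red2 _ M₁ h3 h2 rfl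
  have hr : ReductionOf M N := ⟨M₁, h1, h2, h4, h7⟩
  obtain ⟨r1, r2⟩ := reduction_rep hM hr
  exact ⟨N, hr, h6, ⟨⟨h5, r1.conn.trim r1.dual, r1.dual⟩,
    isRed_of_no_red2 h6 h5 r1.dual r1.conn h7, r1.lang⟩, r2⟩

theorem exists_exp (M : Autom A) (p q : M.Q) (w : List (Ltr A)) (hw : w ≠ []) [Finite M.Q] :
    ∃ N : Autom A, M.IsExpansion p w q N ∧ Finite N.Q := by
  classical
  let Q' := M.Q ⊕ {i : Fin (w.length + 1) // 0 < (i : ℕ) ∧ (i : ℕ) < w.length}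
  let c : Fin (w.length + 1) → Q' := fun i =>
    if h : 0 < (i : ℕ) ∧ (i : ℕ) < w.length then Sum.inr ⟨i, h⟩
    else if (i : ℕ) = 0 then Sum.inl p else Sum.inl q
  have hl : 0 < w.length := List.length_pos_iff.2 hw
  have hc : ∀ (i : Fin (w.length + 1)) (h : 0 < (i : ℕ) ∧ (i : ℕ) < w.length),
      c i = Sum.inr ⟨i, h⟩ := fun i h => by simp only [c]; rw [dif_pos h]
  have hc' : ∀ (i : Fin (w.length + 1)) (h : ¬ (0 < (i : ℕ) ∧ (i : ℕ) < w.length)),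
      ∃ x, c i = Sum.inl x := fun i h => by
    simp only [c]; rw [dif_neg h]; split_ifs <;> exact ⟨_, rfl⟩
  let N : Autom A := ⟨Q', Sum.inl M.q0, {e |
      ((∃ e' ∈ M.E, e = (Sum.inl e'.1, e'.2.1, Sum.inl e'.2.2)) ∨
        ∃ i : Fin w.length,
          e = (c i.castSucc, w.get i, c i.succ) ∨
          e = (c i.succ, Ltr.inv (w.get i), c i.castSucc))}⟩
  refine ⟨N, ⟨hw, Sum.inl, c, Sum.inl_injective, rfl, ?_, ?_, ?_, ?_, ?_, fun e => Iff.rfl⟩,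
    inferInstanceAs (Finite Q')⟩
  · simp [c]
  · simp only [c, Fin.val_last, lt_irrefl, and_false, dite_false]
    rw [if_neg (by omega)]
  · rintro i h1 h2 ⟨x, hx⟩
    rw [hc i ⟨h1, h2⟩] at hx
    cases hx
  · intro i j h1 h2 e
    rw [hc i ⟨h1, h2⟩] at e
    by_cases hj : 0 < (j : ℕ) ∧ (j : ℕ) < w.length
    · rw [hc j hj] at e
      have := Sum.inr_injective e
      exact congrArg Subtype.val this
    · obtain ⟨x, hx⟩ := hc' j hj
      rw [hx] at e
      cases e
  · rintro (x | ⟨i, hi⟩)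
    · exact Or.inl ⟨x, rfl⟩
    · exact Or.inr ⟨i, hc i hi⟩

theorem iso_refl (M : Autom A) : M.Isomorphic M :=
  ⟨Equiv.refl _, ⟨rfl, fun _ _ _ h => h⟩, ⟨rfl, fun _ _ _ h => h⟩⟩

theorem exists_istep {M : Autom A} {L : Subgroup (FreeGroup A)} (hf : Finite M.Q)
    (hM : M.Represents L) {u v : List (Ltr A)} {p q : M.Q} (hpq : p ≠ q) (hu : M.Path M.q0 u p)
    (hv : M.Path M.q0 v q) : ∃ N, M.IStep p q N ∧ Finite N.Q ∧
      N.Represents (L ⊔ Subgroup.zpowers (FreeGroup.mk u * (FreeGroup.mk v)⁻¹)) := by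
  obtain ⟨N', h1, h2, -⟩ := exists_ident M p q hpq
  obtain ⟨N, h3, h4, h5, -⟩ := exists_reduction h2 (ident_rep (Rep0.of_rep hM) h1 hu hv)
  exact ⟨N, ⟨hpq, N', N, h1, h3, iso_refl N⟩, h4, h5⟩

theorem exists_expstep {M : Autom A} {L : Subgroup (FreeGroup A)} (hf : Finite M.Q)
    (hM : M.Represents L) {u v w : List (Ltr A)} {p q : M.Q} (hw : w ≠ []) (hu : M.Path M.q0 u p)
    (hv : M.Path M.q0 v q) : ∃ N, M.ExpStep p w q N ∧ Finite N.Q ∧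
      N.Represents
        (L ⊔ Subgroup.zpowers (FreeGroup.mk u * FreeGroup.mk w * (FreeGroup.mk v)⁻¹)) ∧
      ∀ g ∈ Pz N,
        ∃ h ∈ L ⊔ Subgroup.zpowers (FreeGroup.mk u * FreeGroup.mk w * (FreeGroup.mk v)⁻¹),
        (∃ x ∈ Pz M, g = h * x) ∨ ∃ i, g = h * (FreeGroup.mk u * FreeGroup.mk (w.take i)) := by
  obtain ⟨N', h1, h2⟩ := exists_exp M p q w hw
  obtain ⟨r1, r2⟩ := exp_rep (Rep0.of_rep hM) h1 hu hv
  obtain ⟨N, h3, h4, h5, h6⟩ := exists_reduction h2 r1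
  exact ⟨N, ⟨N', N, h1, h3, iso_refl N⟩, h4, h5, fun g hg => r2 g (h6 hg)⟩

end FFP

namespace FFP
open Autom
variable {A : Type}

theorem read_of_mem {M : Autom A} {L : Subgroup (FreeGroup A)} (hM : M.Represents L)
    {w : List (Ltr A)} (hw : IsReducedWord w) (h : FreeGroup.mk w ∈ L) :
    M.Path M.q0 w M.q0 := by
  obtain ⟨u, hu, e⟩ := (Rep0.of_rep hM).exists_loop h
  exact Path_red hM.1.1 hM.1.2.2 (eq_of_reduced hw e.symm) hu

theorem reduced_nil : IsReducedWord ([] : List (Ltr A)) := by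
  rw [isReducedWord_iff]; exact FreeGroup.IsReduced.nil

theorem reduced_single (a : Ltr A) : IsReducedWord [a] := by
  rw [isReducedWord_iff]; exact FreeGroup.IsReduced.singleton

theorem reduced_snoc {u : List (Ltr A)} {a : Ltr A} (hu : IsReducedWord u)
    (h : ∀ s, u ≠ s ++ [Ltr.inv a]) : IsReducedWord (u ++ [a]) := by
  rcases List.eq_nil_or_concat u with rfl | ⟨s, b, rfl⟩
  · exact reduced_single a
  · rw [List.concat_eq_append] at hu h ⊢
    refine reduced_append_cons hu (reduced_single a) ?_
    intro e
    apply h s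
    rw [e, Ltr_inv_inv]

theorem reduced_cons {u : List (Ltr A)} {a : Ltr A} (hu : IsReducedWord u)
    (h : ∀ s, u ≠ Ltr.inv a :: s) : IsReducedWord (a :: u) := by
  cases u with
  | nil => exact reduced_single a
  | cons b s =>
    have := reduced_append_cons (u := []) (reduced_single a) hu (fun e => h s (by rw [e]))
    simpa using this

theorem reduced_glue {u v : List (Ltr A)} {a : Ltr A} (h1 : IsReducedWord (u ++ [a]))
    (h2 : IsReducedWord (a :: v)) : IsReducedWord (u ++ a :: v) := by
  cases v with
  | nil => exact h1
  | cons b s =>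
    have := reduced_append_cons h1 (reduced_infix_word (v := b :: s) h2 ⟨[a], [], by simp⟩) (by
      rintro rfl
      exact h2 [] s a.1 a.2 rfl)
    simpa using this

theorem Ltr_inv_ne (a : Ltr A) : Ltr.inv a ≠ a := by
  intro h
  have := congrArg Prod.snd h
  simp [Ltr.inv] at this

theorem wordInv_wordInv (u : List (Ltr A)) : wordInv (wordInv u) = u := by
  rw [wordInv_eq, wordInv_eq, FreeGroup.invRev_invRev]

theorem edge_loop {M : Autom A} {L : Subgroup (FreeGroup A)} (hM : M.Represents L)
    {x y : M.Q} {a : Ltr A} (he : (x, a, y) ∈ M.E) :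
    ∃ s t, IsReducedWord (s ++ a :: t) ∧ M.Path M.q0 s x ∧ M.Path y t M.q0 := by
  have hdet := hM.1.1
  have hD := hM.1.2.2
  have he' := (hD _ _ _).1 he
  obtain ⟨u, v, huv, hu, hv⟩ := hM.2.1 x
  obtain ⟨u', v', huv', hu', hv'⟩ := hM.2.1 y
  have flip : ∀ s t : List (Ltr A), IsReducedWord (s ++ Ltr.inv a :: t) →
      IsReducedWord (wordInv t ++ a :: wordInv s) := by
    intro s t h
    have := reduced_wordInv h
    rw [wordInv_append, wordInv_cons, Ltr_inv_inv] at this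
    simpa using this
  by_cases h1 : ∃ s, u = s ++ [Ltr.inv a]
  · obtain ⟨s, rfl⟩ := h1
    obtain ⟨z, h2, h3⟩ := Path_append_iff.1 hu
    rw [Path_single_iff] at h3
    have h4 := (hD _ _ _).1 h3
    rw [Ltr_inv_inv] at h4
    have := hdet _ _ _ _ he h4
    subst this
    refine ⟨wordInv v, wordInv s, flip s v (by simpa using huv), Path_inv hD hv, Path_inv hD h2⟩
  · by_cases h2 : ∃ s, v' = Ltr.inv a :: s
    · obtain ⟨s, rfl⟩ := h2
      obtain ⟨z, h2, h3⟩ := Path_cons_iff.1 hv'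
      have := hdet _ _ _ _ he' h2
      subst this
      exact ⟨wordInv s, wordInv u', flip _ _ huv', Path_inv hD h3, Path_inv hD hu'⟩
    · push Not at h1 h2
      refine ⟨u, v', reduced_glue (reduced_snoc (reduced_infix_word huv ⟨[], v, by simp⟩) h1)
        (reduced_cons (reduced_infix_word huv' ⟨u', [], by simp⟩) h2), hu, hv'⟩

theorem exists_hom {M N : Autom A} {L L' : Subgroup (FreeGroup A)} (hM : M.Represents L)
    (hN : N.Represents L') (hL : L ≤ L') : ∃ ψ, M.IsHom N ψ := by
  have uniq : ∀ x u u' y y', M.Path M.q0 u x → M.Path M.q0 u' x → N.Path N.q0 u y →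
      N.Path N.q0 u' y' → y = y' := by
    intro x u u' y y' h1 h2 h3 h4
    obtain ⟨z, hz, e⟩ := (Rep0.of_rep hN).exists_loop (hL ((Rep0.of_rep hM).mem_of_paths h1 h2))
    refine Path_mk_det hN.1.1 hN.1.2.2 h3 (Path_append hz h4) ?_
    rw [← FreeGroup.mul_mk, e, inv_mul_cancel_right]
  have ex : ∀ x, ∃ u y, M.Path M.q0 u x ∧ N.Path N.q0 u y := by
    intro x
    obtain ⟨u, v, huv, hu, hv⟩ := hM.2.1 x
    obtain ⟨y, hy, -⟩ := Path_append_iff.1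
      (read_of_mem hN huv (hL ((Rep0.of_rep hM).mem_loop (Path_append hu hv))))
    exact ⟨u, y, hu, hy⟩
  choose t ψ h1 h2 using ex
  refine ⟨ψ, uniq _ _ _ _ _ (h1 _) (Path_nil _ _) (h2 _) (Path_nil _ _), fun x a y he => ?_⟩
  obtain ⟨s, r, hr, hs, ht⟩ := edge_loop hM he
  obtain ⟨p, hp, hq⟩ := Path_append_iff.1 (read_of_mem hN hr (hL ((Rep0.of_rep hM).mem_loop
    (Path_append hs (Path_cons_iff.2 ⟨_, he, ht⟩)))))
  obtain ⟨q, hq, -⟩ := Path_cons_iff.1 hq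
  have e1 := uniq _ _ _ _ _ (h1 x) hs (h2 x) hp
  have e2 := uniq _ _ _ _ _ (h1 y) (Path_append hs (Path_single_iff.2 he)) (h2 y)
    (Path_append hp (Path_single_iff.2 hq))
  rw [e1, e2]
  exact hq

theorem Pz_mono {M N : Autom A} {L L' : Subgroup (FreeGroup A)} (hM : M.Represents L)
    (hN : N.Represents L') (hL : L ≤ L') : Pz M ⊆ Pz N := by
  obtain ⟨ψ, h0, hψ⟩ := exists_hom hM hN hL
  rintro _ ⟨u, x, hu, rfl⟩
  refine ⟨u, ψ x, ?_, rfl⟩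
  rw [← h0]
  exact Path_map hψ hu

theorem extension (n : ℕ) : ∀ (M : Autom A) (p q : M.Q) (w : List (Ltr A)), w.length = n →
    M.Deterministic → M.Dual → w ≠ [] → IsReducedWord w →
    (∀ a w', w = a :: w' → ∀ x, (p, a, x) ∉ M.E) →
    (∀ b w', w = w' ++ [b] → ∀ x, (q, Ltr.inv b, x) ∉ M.E) →
    ∃ (B : Autom A) (φ : M.Q → B.Q), B.Deterministic ∧ B.Dual ∧ Injective φ ∧ M.IsHom B φ ∧
      B.Path (φ p) w (φ q) := by
  induction n using Nat.strong_induction_on with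
  | _ n ih =>
    intro M p q w hn hdet hD hne hred hp hq
    cases w with
    | nil => exact absurd rfl hne
    | cons a w' =>
    have hpa := hp a w' rfl
    by_cases hw' : w' = []
    · subst hw'
      have hqa := hq a [] rfl
      refine ⟨⟨M.Q, M.q0, {e | e ∈ M.E ∨ e = (p, a, q) ∨ e = (q, Ltr.inv a, p)}⟩, id, ?_, ?_,
        injective_id, ⟨rfl, fun x b y h => Or.inl h⟩,
        Path_single_iff.2 (Or.inr (Or.inl rfl))⟩
      · rintro x b y y' (h | h | h) (h' | h' | h')
        · exact hdet _ _ _ _ h h'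
        · simp only [Prod.mk.injEq] at h'
          rw [h'.1, h'.2.1] at h
          exact absurd h (hpa _)
        · simp only [Prod.mk.injEq] at h'
          rw [h'.1, h'.2.1] at h
          exact absurd h (hqa _)
        · simp only [Prod.mk.injEq] at h
          rw [h.1, h.2.1] at h'
          exact absurd h' (hpa _)
        · simp only [Prod.mk.injEq] at h h'
          rw [h.2.2, h'.2.2]
        · simp only [Prod.mk.injEq] at h h'
          exact absurd (h'.2.1.symm.trans h.2.1) (Ltr_inv_ne _)
        · simp only [Prod.mk.injEq] at h
          rw [h.1, h.2.1] at h'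
          exact absurd h' (hqa _)
        · simp only [Prod.mk.injEq] at h h'
          exact absurd (h.2.1.symm.trans h'.2.1) (Ltr_inv_ne _)
        · simp only [Prod.mk.injEq] at h h'
          rw [h.2.2, h'.2.2]
      · have key : ∀ x b y, ((x, b, y) ∈ M.E ∨ (x, b, y) = (p, a, q) ∨ (x, b, y) = (q, Ltr.inv a, p)) →
            ((y, Ltr.inv b, x) ∈ M.E ∨ (y, Ltr.inv b, x) = (p, a, q) ∨
              (y, Ltr.inv b, x) = (q, Ltr.inv a, p)) := by
          rintro x b y (h | h | h)
          · exact Or.inl ((hD _ _ _).1 h)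
          · simp only [Prod.mk.injEq] at h
            obtain ⟨rfl, rfl, rfl⟩ := h
            exact Or.inr (Or.inr rfl)
          · simp only [Prod.mk.injEq] at h
            obtain ⟨rfl, rfl, rfl⟩ := h
            rw [Ltr_inv_inv]
            exact Or.inr (Or.inl rfl)
        intro x b y
        constructor
        · exact key x b y
        · intro h
          have := key _ _ _ h
          rw [Ltr_inv_inv] at this
          exact this
    · let M' : Autom A := ⟨Option M.Q, some M.q0, {e | (∃ x b y, (x, b, y) ∈ M.E ∧
          e = (some x, b, some y)) ∨ e = (some p, a, none) ∨ e = (none, Ltr.inv a, some p)}⟩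
      have hdet' : M'.Deterministic := by
        rintro x b y y' (⟨x0, b0, y0, h0, h⟩ | h | h) (⟨x1, b1, y1, h1, h'⟩ | h' | h')
        · simp only [Prod.mk.injEq] at h h'
          obtain ⟨rfl, rfl, rfl⟩ := h
          obtain ⟨h2, rfl, rfl⟩ := h'
          cases h2
          rw [hdet _ _ _ _ h0 h1]
        · simp only [Prod.mk.injEq] at h h'
          obtain ⟨rfl, rfl, rfl⟩ := h
          obtain ⟨h2, rfl, rfl⟩ := h'
          cases h2
          exact absurd h0 (hpa _)
        · simp only [Prod.mk.injEq] at h h'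
          obtain ⟨rfl, rfl, rfl⟩ := h
          obtain ⟨h2, rfl, rfl⟩ := h'
          cases h2
        · simp only [Prod.mk.injEq] at h h'
          obtain ⟨rfl, rfl, rfl⟩ := h
          obtain ⟨h2, rfl, rfl⟩ := h'
          cases h2
          exact absurd h1 (hpa _)
        · simp only [Prod.mk.injEq] at h h'
          rw [h.2.2, h'.2.2]
        · simp only [Prod.mk.injEq] at h h'
          exact absurd (h'.2.1.symm.trans h.2.1) (Ltr_inv_ne _)
        · simp only [Prod.mk.injEq] at h h'
          obtain ⟨rfl, rfl, rfl⟩ := h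
          obtain ⟨h2, rfl, rfl⟩ := h'
          cases h2
        · simp only [Prod.mk.injEq] at h h'
          exact absurd (h.2.1.symm.trans h'.2.1) (Ltr_inv_ne _)
        · simp only [Prod.mk.injEq] at h h'
          rw [h.2.2, h'.2.2]
      have hD' : M'.Dual := by
        have key : ∀ x b y, (x, b, y) ∈ M'.E → (y, Ltr.inv b, x) ∈ M'.E := by
          rintro x b y (⟨x0, b0, y0, h0, h⟩ | h | h)
          · simp only [Prod.mk.injEq] at h
            obtain ⟨rfl, rfl, rfl⟩ := h
            exact Or.inl ⟨_, _, _, (hD _ _ _).1 h0, rfl⟩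
          · simp only [Prod.mk.injEq] at h
            obtain ⟨rfl, rfl, rfl⟩ := h
            exact Or.inr (Or.inr rfl)
          · simp only [Prod.mk.injEq] at h
            obtain ⟨rfl, rfl, rfl⟩ := h
            rw [Ltr_inv_inv]
            exact Or.inr (Or.inl rfl)
        intro x b y
        constructor
        · exact key x b y
        · intro h
          have := key _ _ _ h
          rw [Ltr_inv_inv] at this
          exact this
      have hnone : ∀ b x, ((none, b, x) : Option M.Q × Ltr A × Option M.Q) ∈ M'.E → b = Ltr.inv a := by
        rintro b x (⟨x0, b0, y0, h0, h⟩ | h | h)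
        · simp at h
        · simp at h
        · simp only [Prod.mk.injEq] at h
          exact h.2.1
      have hhom : M.IsHom M' some := ⟨rfl, fun x b y h => Or.inl ⟨x, b, y, h, rfl⟩⟩
      have hedge : ((some p, a, none) : Option M.Q × Ltr A × Option M.Q) ∈ M'.E := Or.inr (Or.inl rfl)
      have hedge' : ((none, Ltr.inv a, some p) : Option M.Q × Ltr A × Option M.Q) ∈ M'.E :=
        Or.inr (Or.inr rfl)
      have hstart : ∀ b s, w' = b :: s → ∀ x,
          ((none, b, x) : Option M.Q × Ltr A × Option M.Q) ∉ M'.E := by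
        rintro b s rfl x h
        have := hnone _ _ h
        subst this
        exact hred [] s a.1 a.2 rfl
      by_cases hlol : q = p ∧ ∃ s, w' = s ++ [Ltr.inv a]
      · obtain ⟨rfl, s, rfl⟩ := hlol
        have hs : s ≠ [] := by
          rintro rfl
          exact hred [] [] a.1 a.2 rfl
        obtain ⟨B, φ, h1, h2, h3, h4, h5⟩ := ih s.length (by simp at hn; omega) M' none none s rfl
          hdet' hD' hs (reduced_infix_word hred ⟨[a], [Ltr.inv a], by simp⟩) (by
            rintro b t rfl
            exact hstart b (t ++ [Ltr.inv a]) (by simp)) (by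
            rintro b t rfl x h
            have := hnone _ _ h
            have : b = a := by rw [← Ltr_inv_inv b, this, Ltr_inv_inv]
            subst this
            exact hred (b :: t) [] b.1 b.2 (by simp [Ltr.inv]))
        refine ⟨B, φ ∘ some, h1, h2, h3.comp (Option.some_injective _),
          ⟨h4.1, fun x b y h => h4.2 _ _ _ (hhom.2 _ _ _ h)⟩, ?_⟩
        exact Path_cons_iff.2 ⟨φ none, h4.2 _ _ _ hedge,
          Path_append h5 (Path_single_iff.2 (h4.2 _ _ _ hedge'))⟩
      · obtain ⟨B, φ, h1, h2, h3, h4, h5⟩ := ih w'.length (by simp at hn; omega) M' none (some q) w'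
          rfl hdet' hD' hw' (reduced_infix_word hred ⟨[a], [], by simp⟩) hstart (by
            rintro b t rfl x (⟨x0, b0, y0, h0, h⟩ | h | h)
            · simp only [Prod.mk.injEq] at h
              obtain ⟨h6, rfl, rfl⟩ := h
              cases h6
              exact hq b (a :: t) (by simp) _ h0
            · simp only [Prod.mk.injEq] at h
              obtain ⟨h6, rfl, rfl⟩ := h
              cases h6
              exact hlol ⟨rfl, t, by rw [Ltr_inv_inv]⟩
            · simp at h)
        refine ⟨B, φ ∘ some, h1, h2, h3.comp (Option.some_injective _),
          ⟨h4.1, fun x b y h => h4.2 _ _ _ (hhom.2 _ _ _ h)⟩, ?_⟩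
        exact Path_cons_iff.2 ⟨φ none, h4.2 _ _ _ hedge, h5⟩

theorem hom_injective {M N : Autom A} {L : Subgroup (FreeGroup A)} (hM : M.Represents L)
    {p q : M.Q} {u v w : List (Ltr A)} (hu : M.Path M.q0 u p) (hv : M.Path M.q0 v q)
    (hne : w ≠ []) (hred : IsReducedWord w)
    (hp : ∀ a w', w = a :: w' → ∀ x, (p, a, x) ∉ M.E)
    (hq : ∀ b w', w = w' ++ [b] → ∀ x, (q, Ltr.inv b, x) ∉ M.E)
    (hN : N.Represents (L ⊔ Subgroup.zpowers
      (FreeGroup.mk u * FreeGroup.mk w * (FreeGroup.mk v)⁻¹)))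
    {ψ : M.Q → N.Q} (hψ : M.IsHom N ψ) : Injective ψ := by
  obtain ⟨B, φ, h1, h2, h3, h4, h5⟩ := extension _ M p q w rfl hM.1.1 hM.1.2.2 hne hred hp hq
  have hle : L ⊔ Subgroup.zpowers (FreeGroup.mk u * FreeGroup.mk w * (FreeGroup.mk v)⁻¹) ≤
      langSub B h2 := by
    refine sup_le ?_ ?_
    · intro g hg
      have := subset_lang_of_hom h4
      rw [hM.2.2] at this
      exact this hg
    · rw [Subgroup.zpowers_le]
      have a1 := Path_map h4.2 hu
      have a2 := Path_inv h2 (Path_map h4.2 hv)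
      rw [h4.1] at a1 a2
      exact ⟨u ++ w ++ wordInv v, Path_append (Path_append a1 h5) a2, by
        rw [← FreeGroup.mul_mk, ← FreeGroup.mul_mk, mk_wordInv]⟩
  intro x y e
  obtain ⟨s, hs⟩ := (Rep0.of_rep hM).conn x
  obtain ⟨t, ht⟩ := (Rep0.of_rep hM).conn y
  have b1 := Path_map hψ.2 hs
  have b2 := Path_map hψ.2 ht
  rw [hψ.1] at b1 b2
  rw [e] at b1
  have hm := hle ((Rep0.of_rep hN).mem_of_paths b1 b2)
  obtain ⟨z, hz, ez⟩ := hm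
  have c1 := Path_map h4.2 hs
  have c2 := Path_map h4.2 ht
  rw [h4.1] at c1 c2
  apply h3
  refine Path_mk_det h1 h2 c1 (Path_append hz c2) ?_
  rw [← FreeGroup.mul_mk, ez, inv_mul_cancel_right]

end FFP

namespace FFP
open Autom
variable {A : Type}

def FinRep (L : Subgroup (FreeGroup A)) : Prop := ∃ M : Autom A, Finite M.Q ∧ M.Represents L

def PP (L : Subgroup (FreeGroup A)) : Set (FreeGroup A) := {g | ∃ M : Autom A, M.Represents L ∧ g ∈ Pz M}

theorem PP_eq {M : Autom A} {L : Subgroup (FreeGroup A)} (hM : M.Represents L) : PP L = Pz M := by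
  ext g
  constructor
  · rintro ⟨N, hN, hg⟩
    exact Pz_mono hN hM le_rfl hg
  · intro h
    exact ⟨M, hM, h⟩

theorem PP_mono {L L' : Subgroup (FreeGroup A)} (h : FinRep L') (hL : L ≤ L') : PP L ⊆ PP L' := by
  obtain ⟨N, -, hN⟩ := h
  rintro g ⟨M, hM, hg⟩
  exact ⟨N, hN, Pz_mono hM hN hL hg⟩

theorem PP_mul {L : Subgroup (FreeGroup A)} {h x : FreeGroup A} (hh : h ∈ L) (hx : x ∈ PP L) :
    h * x ∈ PP L := by
  obtain ⟨M, hM, u, p, hu, rfl⟩ := hx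
  obtain ⟨z, hz, rfl⟩ := (Rep0.of_rep hM).exists_loop hh
  exact ⟨M, hM, z ++ u, p, Path_append hz hu, by rw [← FreeGroup.mul_mk]⟩

theorem PP_one {L : Subgroup (FreeGroup A)} (h : FinRep L) : 1 ∈ PP L := by
  obtain ⟨M, -, hM⟩ := h
  exact ⟨M, hM, [], M.q0, Path_nil _ _, rfl⟩

theorem FinRep_bot : FinRep (⊥ : Subgroup (FreeGroup A)) := by
  let M : Autom A := ⟨Unit, (), ∅⟩
  have hp : ∀ u x y, M.Path x u y → u = [] := by
    intro u x y h
    cases u with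
    | nil => rfl
    | cons a u =>
      obtain ⟨q, h1, -⟩ := Path_cons_iff.1 h
      exact h1.elim
  have hnil : ∀ x y : M.Q, M.Path x [] y := fun x y => Path_nil M x
  refine ⟨M, inferInstanceAs (Finite Unit), ⟨fun _ _ _ _ h => h.elim, fun q => ⟨[], [], hnil _ _, hnil _ _⟩,
    fun _ _ _ => Iff.rfl⟩, fun q => ⟨[], [], reduced_nil, hnil _ _, hnil _ _⟩, ?_⟩
  ext g
  constructor
  · rintro ⟨u, hu, rfl⟩
    rw [hp _ _ _ hu]
    exact (⊥ : Subgroup (FreeGroup A)).one_mem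
  · intro h
    have : g = 1 := h
    subst this
    exact ⟨[], hnil _ _, rfl⟩

theorem FinRep_sup {L : Subgroup (FreeGroup A)} (h : FinRep L) (g : FreeGroup A) :
    FinRep (L ⊔ Subgroup.zpowers g) := by
  obtain ⟨w, rfl⟩ : ∃ w, FreeGroup.mk w = g := Quot.exists_rep g
  by_cases hw : w = []
  · subst hw
    have : L ⊔ Subgroup.zpowers (FreeGroup.mk ([] : List (Ltr A))) = L :=
      sup_eq_left.2 (by rw [Subgroup.zpowers_le]; exact L.one_mem)
    rwa [this]
  · obtain ⟨M, hf, hM⟩ := h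
    obtain ⟨N, -, h1, h2, -⟩ := exists_expstep hf hM hw (Path_nil M M.q0) (Path_nil M M.q0)
    have e : FreeGroup.mk ([] : List (Ltr A)) * FreeGroup.mk w * (FreeGroup.mk [])⁻¹ = FreeGroup.mk w := by
      change 1 * FreeGroup.mk w * 1⁻¹ = _
      simp
    rw [e] at h2
    exact ⟨N, h1, h2⟩

def Cost (L : Subgroup (FreeGroup A)) (g : FreeGroup A) (n : ℕ) : Prop :=
  ∃ x ∈ PP L, ∃ y ∈ PP L, ∃ w : List (Ltr A), w.length = n ∧ g = x * FreeGroup.mk w * y⁻¹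

noncomputable def cost (L : Subgroup (FreeGroup A)) (g : FreeGroup A) : ℕ := sInf {n | Cost L g n}

theorem cost_le {L : Subgroup (FreeGroup A)} {g : FreeGroup A} {n : ℕ} (h : Cost L g n) :
    cost L g ≤ n := Nat.sInf_le h

theorem cost_spec {L : Subgroup (FreeGroup A)} (hL : FinRep L) (g : FreeGroup A) :
    Cost L g (cost L g) := by
  apply Nat.sInf_mem (s := {n | Cost L g n})
  obtain ⟨w, rfl⟩ : ∃ w, FreeGroup.mk w = g := Quot.exists_rep g
  exact ⟨w.length, 1, PP_one hL, 1, PP_one hL, w, rfl, by simp⟩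

theorem istep_of_cost {M : Autom A} {L : Subgroup (FreeGroup A)} (hf : Finite M.Q)
    (hM : M.Represents L) {g : FreeGroup A} (hg : g ∉ L) (hc : cost L g = 0) :
    ∃ N, IStepAny M N ∧ Finite N.Q ∧ N.Represents (L ⊔ Subgroup.zpowers g) := by
  have := cost_spec ⟨M, hf, hM⟩ g
  rw [hc] at this
  obtain ⟨x, hx, y, hy, w, hw, rfl⟩ := this
  rw [PP_eq hM] at hx hy
  obtain ⟨u, p, hu, rfl⟩ := hx
  obtain ⟨v, q, hv, rfl⟩ := hy
  rw [List.length_eq_zero_iff] at hw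
  subst hw
  have e : FreeGroup.mk u * FreeGroup.mk ([] : List (Ltr A)) * (FreeGroup.mk v)⁻¹ =
      FreeGroup.mk u * (FreeGroup.mk v)⁻¹ := by
    change FreeGroup.mk u * 1 * _ = _
    rw [mul_one]
  rw [e] at hg ⊢
  have hpq : p ≠ q := by
    rintro rfl
    exact hg ((Rep0.of_rep hM).mem_of_paths hu hv)
  obtain ⟨N, h1, h2, h3⟩ := exists_istep hf hM hpq hu hv
  exact ⟨N, ⟨p, q, h1⟩, h2, h3⟩

theorem minimal_data {M : Autom A} {L : Subgroup (FreeGroup A)} (hf : Finite M.Q)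
    (hM : M.Represents L) (g : FreeGroup A) :
    ∃ (u v w : List (Ltr A)) (p q : M.Q), IsReducedWord u ∧ IsReducedWord v ∧ IsReducedWord w ∧
      M.Path M.q0 u p ∧ M.Path M.q0 v q ∧ w.length = cost L g ∧
      g = FreeGroup.mk u * FreeGroup.mk w * (FreeGroup.mk v)⁻¹ ∧
      (∀ a w', w = a :: w' → ∀ x, (p, a, x) ∉ M.E) ∧
      (∀ b w', w = w' ++ [b] → ∀ x, (q, Ltr.inv b, x) ∉ M.E) := by
  obtain ⟨x, hx, y, hy, w, hw, hg⟩ := cost_spec ⟨M, hf, hM⟩ g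
  have hx' := hx
  have hy' := hy
  rw [PP_eq hM] at hx hy
  obtain ⟨u, p, hu, rfl⟩ := hx
  obtain ⟨v, q, hv, rfl⟩ := hy
  obtain ⟨u', hu1, hu2, -, hu3⟩ := exists_reduced_path hM.1.1 hM.1.2.2 hu
  obtain ⟨v', hv1, hv2, -, hv3⟩ := exists_reduced_path hM.1.1 hM.1.2.2 hv
  refine ⟨u', v', w, p, q, hu1, hv1, ?_, hu2, hv2, hw, by rw [hu3, hv3]; exact hg, ?_, ?_⟩
  · rintro s t a b rfl
    have := cost_le (L := L) (g := g) (n := (s ++ t).length) ⟨_, hx', _, hy', s ++ t, rfl, by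
      rw [← mk_eq_of_step s t a b]; exact hg⟩
    simp at this hw
    omega
  · rintro a w' rfl z hz
    have := cost_le (L := L) (g := g) (n := w'.length) ⟨FreeGroup.mk (u ++ [a]),
      ⟨M, hM, _, z, Path_append hu (Path_single_iff.2 hz), rfl⟩, _, hy', w', rfl, by
      rw [hg, FreeGroup.mul_mk, FreeGroup.mul_mk]; simp⟩
    simp at hw
    omega
  · rintro b w' rfl z hz
    have := cost_le (L := L) (g := g) (n := w'.length) ⟨_, hx', FreeGroup.mk (v ++ [Ltr.inv b]),
      ⟨M, hM, _, z, Path_append hv (Path_single_iff.2 hz), rfl⟩, w', rfl, by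
      have : FreeGroup.mk [Ltr.inv b] = (FreeGroup.mk [b])⁻¹ := mk_wordInv [b]
      rw [hg, ← FreeGroup.mul_mk, ← FreeGroup.mul_mk, this]
      group⟩
    simp at hw
    omega

theorem restep_of_cost {M : Autom A} {L : Subgroup (FreeGroup A)} (hf : Finite M.Q)
    (hM : M.Represents L) {g : FreeGroup A} (hc : 0 < cost L g) :
    ∃ N, REStepAny M N ∧ Finite N.Q ∧ N.Represents (L ⊔ Subgroup.zpowers g) := by
  obtain ⟨u, v, w, p, q, hu1, hv1, hw1, hu, hv, hl, hg, hp, hq⟩ := minimal_data hf hM g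
  have hw : w ≠ [] := by
    rintro rfl
    simp at hl
    omega
  obtain ⟨N, h1, h2, h3, -⟩ := exists_expstep hf hM hw hu hv
  obtain ⟨ψ, hψ⟩ := exists_hom hM h3 le_sup_left
  refine ⟨N, ⟨p, w, q, hw1, h1, ψ, hom_injective hM hu hv hw hw1 hp hq h3 hψ, hψ⟩, h2, ?_⟩
  rw [hg]
  exact h3

/-! ### The swap lemma -/

theorem sup2_le {L X : Subgroup (FreeGroup A)} {g g' : FreeGroup A} (hL : L ≤ X) (h : g ∈ X)
    (h' : g' ∈ X) : L ⊔ Subgroup.zpowers g ⊔ Subgroup.zpowers g' ≤ X :=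
  sup_le (sup_le hL (by rwa [Subgroup.zpowers_le])) (by rwa [Subgroup.zpowers_le])

theorem mem_left {L : Subgroup (FreeGroup A)} (g g' : FreeGroup A) :
    g ∈ L ⊔ Subgroup.zpowers g ⊔ Subgroup.zpowers g' :=
  le_sup_left (a := L ⊔ Subgroup.zpowers g)
    (le_sup_right (a := L) (Subgroup.mem_zpowers g))

theorem mem_right {L : Subgroup (FreeGroup A)} (g g' : FreeGroup A) :
    g' ∈ L ⊔ Subgroup.zpowers g ⊔ Subgroup.zpowers g' :=
  le_sup_right (a := L ⊔ Subgroup.zpowers g) (Subgroup.mem_zpowers g')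

theorem le_sup2 {L : Subgroup (FreeGroup A)} (g g' : FreeGroup A) :
    L ≤ L ⊔ Subgroup.zpowers g ⊔ Subgroup.zpowers g' :=
  le_sup_left.trans le_sup_left

def SwapGoal (L : Subgroup (FreeGroup A)) (g : FreeGroup A) (n : ℕ) (k : FreeGroup A) : Prop :=
  ∃ g1 g2, L ⊔ Subgroup.zpowers g1 ⊔ Subgroup.zpowers g2 =
      L ⊔ Subgroup.zpowers g ⊔ Subgroup.zpowers k ∧
    cost L g1 + cost (L ⊔ Subgroup.zpowers g1) g2 ≤ n ∧ cost L g1 < n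

theorem SwapGoal.congr {L : Subgroup (FreeGroup A)} {g : FreeGroup A} {n : ℕ} {k k' : FreeGroup A}
    (h : SwapGoal L g n k) (e : L ⊔ Subgroup.zpowers g ⊔ Subgroup.zpowers k =
      L ⊔ Subgroup.zpowers g ⊔ Subgroup.zpowers k') : SwapGoal L g n k' := by
  obtain ⟨g1, g2, h1, h2⟩ := h
  exact ⟨g1, g2, h1.trans e, h2⟩

theorem SwapGoal.inv {L : Subgroup (FreeGroup A)} {g : FreeGroup A} {n : ℕ} {k : FreeGroup A}
    (h : SwapGoal L g n k⁻¹) : SwapGoal L g n k :=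
  h.congr (by rw [Subgroup.zpowers_inv])

theorem read_prefix_path {M : Autom A} {L : Subgroup (FreeGroup A)}
    (hM : M.Represents L) {p q : M.Q} {u v w1 w3 : List (Ltr A)}
    (hu1 : IsReducedWord u) (hv1 : IsReducedWord v) (hu : M.Path M.q0 u p) (hv : M.Path M.q0 v q)
    (h1 : w1 ≠ []) (h3 : w3 ≠ []) (hred : IsReducedWord (w1 ++ w3))
    (hp : ∀ a w', w1 = a :: w' → ∀ x, (p, a, x) ∉ M.E)
    (hq : ∀ b w', w3 = w' ++ [b] → ∀ x, (q, Ltr.inv b, x) ∉ M.E)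
    {L' : Subgroup (FreeGroup A)} (hL' : FinRep L')
    (hm : FreeGroup.mk u * FreeGroup.mk (w1 ++ w3) * (FreeGroup.mk v)⁻¹ ∈ L') :
    FreeGroup.mk u * FreeGroup.mk w1 ∈ PP L' := by
  obtain ⟨N, -, hN⟩ := hL'
  have hD := hM.1.2.2
  cases w1 with
  | nil => exact absurd rfl h1
  | cons a s =>
  rcases List.eq_nil_or_concat w3 with rfl | ⟨t, b, rfl⟩
  · exact absurd rfl h3
  rw [List.concat_eq_append] at *
  have r1 : IsReducedWord (u ++ [a]) := by
    refine reduced_snoc hu1 ?_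
    rintro z rfl
    obtain ⟨r, -, h2⟩ := Path_append_iff.1 hu
    rw [Path_single_iff] at h2
    have h4 := (hD _ _ _).1 h2
    rw [Ltr_inv_inv] at h4
    exact hp a s rfl _ h4
  have r2 : IsReducedWord (b :: wordInv v) := by
    refine reduced_cons (reduced_wordInv hv1) ?_
    intro z hz
    have hz' : v = wordInv z ++ [b] := by
      rw [← wordInv_wordInv v, hz, wordInv_cons, Ltr_inv_inv]
    rw [hz'] at hv
    obtain ⟨r, -, h2⟩ := Path_append_iff.1 hv
    rw [Path_single_iff] at h2
    exact hq b t rfl _ ((hD _ _ _).1 h2)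
  have r3 : IsReducedWord (u ++ a :: (s ++ (t ++ [b]))) := reduced_glue r1 (by simpa using hred)
  have r4 : IsReducedWord ((u ++ a :: (s ++ t)) ++ b :: wordInv v) :=
    reduced_glue (by simpa using r3) r2
  have hm' : FreeGroup.mk ((u ++ a :: (s ++ t)) ++ b :: wordInv v) ∈ L' := by
    rw [← mk_wordInv, FreeGroup.mul_mk, FreeGroup.mul_mk] at hm
    simpa using hm
  have := read_of_mem hN r4 hm'
  have e : (u ++ a :: (s ++ t)) ++ b :: wordInv v = (u ++ a :: s) ++ (t ++ b :: wordInv v) := by simp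
  rw [e] at this
  obtain ⟨y, hy, -⟩ := Path_append_iff.1 this
  exact ⟨N, hN, _, y, hy, by rw [FreeGroup.mul_mk]⟩

theorem swap_c0 {M : Autom A} {L : Subgroup (FreeGroup A)} (hf : Finite M.Q)
    (hM : M.Represents L) {p q : M.Q} {u v : List (Ltr A)}
    (hu1 : IsReducedWord u) (hv1 : IsReducedWord v) (hu : M.Path M.q0 u p) (hv : M.Path M.q0 v q)
    (w1 w2 w3 : List (Ltr A)) (h2 : w2 ≠ [])
    (hp : ∀ a w', w1 ++ w2 ++ w3 = a :: w' → ∀ x, (p, a, x) ∉ M.E)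
    (hq : ∀ b w', w1 ++ w2 ++ w3 = w' ++ [b] → ∀ x, (q, Ltr.inv b, x) ∉ M.E)
    (hX : w1 = [] ∨ w3 = [] ∨ IsReducedWord (w1 ++ w3)) :
    SwapGoal L (FreeGroup.mk u * FreeGroup.mk (w1 ++ w2 ++ w3) * (FreeGroup.mk v)⁻¹)
      (w1 ++ w2 ++ w3).length
      ((FreeGroup.mk u * FreeGroup.mk w1) * FreeGroup.mk (wordInv w2) *
        (FreeGroup.mk u * FreeGroup.mk w1)⁻¹) := by
  have hfin : FinRep L := ⟨M, hf, hM⟩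
  have hu' : FreeGroup.mk u ∈ PP L := ⟨M, hM, u, p, hu, rfl⟩
  have hv' : FreeGroup.mk v ∈ PP L := ⟨M, hM, v, q, hv, rfl⟩
  have hl2 : 0 < w2.length := List.length_pos_iff.2 h2
  set g1 := FreeGroup.mk u * FreeGroup.mk (w1 ++ w3) * (FreeGroup.mk v)⁻¹ with hg1
  set g2 := (FreeGroup.mk u * FreeGroup.mk w1) * FreeGroup.mk (wordInv w2) *
        (FreeGroup.mk u * FreeGroup.mk w1)⁻¹ with hg2
  have hfin1 : FinRep (L ⊔ Subgroup.zpowers g1) := FinRep_sup hfin g1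
  have hg1m : g1 ∈ L ⊔ Subgroup.zpowers g1 := le_sup_right (a := L) (Subgroup.mem_zpowers g1)
  have hmono := PP_mono hfin1 (le_sup_left (a := L))
  have e : FreeGroup.mk u * FreeGroup.mk (w1 ++ w2 ++ w3) * (FreeGroup.mk v)⁻¹ = g2⁻¹ * g1 := by
    rw [hg1, hg2, mk_wordInv]
    simp only [← FreeGroup.mul_mk]
    group
  have hc1 : cost L g1 ≤ w1.length + w3.length :=
    cost_le ⟨_, hu', _, hv', w1 ++ w3, by simp, rfl⟩
  have hPP : FreeGroup.mk u * FreeGroup.mk w1 ∈ PP (L ⊔ Subgroup.zpowers g1) := by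
    by_cases h1 : w1 = []
    · subst h1
      have : FreeGroup.mk u * FreeGroup.mk ([] : List (Ltr A)) = FreeGroup.mk u := mul_one _
      rw [this]
      exact hmono hu'
    by_cases h3 : w3 = []
    · have : FreeGroup.mk u * FreeGroup.mk w1 = g1 * FreeGroup.mk v := by
        rw [hg1, h3, List.append_nil, inv_mul_cancel_right]
      rw [this]
      exact PP_mul hg1m (hmono hv')
    have hr : IsReducedWord (w1 ++ w3) := by
      rcases hX with h | h | h
      · exact absurd h h1
      · exact absurd h h3
      · exact h
    refine read_prefix_path hM hu1 hv1 hu hv h1 h3 hr ?_ ?_ hfin1 hg1m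
    · rintro a w' rfl
      exact hp a (w' ++ w2 ++ w3) (by simp)
    · rintro b w' rfl
      exact hq b (w1 ++ w2 ++ w') (by simp)
  have hc2 : cost (L ⊔ Subgroup.zpowers g1) g2 ≤ w2.length :=
    cost_le ⟨_, hPP, _, hPP, wordInv w2, by simp [wordInv], rfl⟩
  refine ⟨g1, g2, ?_, ?_, ?_⟩
  · rw [e]
    apply le_antisymm
    · refine sup2_le (le_sup2 _ _) ?_ (mem_right _ _)
      have := mul_mem (mem_right (L := L) (g2⁻¹ * g1) g2) (mem_left (L := L) (g2⁻¹ * g1) g2)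
      rwa [mul_inv_cancel_left] at this
    · exact sup2_le (le_sup2 _ _) (mul_mem (inv_mem (mem_right _ _)) (mem_left _ _)) (mem_right _ _)
  · simp only [List.length_append]
    omega
  · simp only [List.length_append]
    omega

theorem swap_c {M : Autom A} {L : Subgroup (FreeGroup A)} (hf : Finite M.Q)
    (hM : M.Represents L) {p q : M.Q} {u v w : List (Ltr A)}
    (hu1 : IsReducedWord u) (hv1 : IsReducedWord v) (hu : M.Path M.q0 u p) (hv : M.Path M.q0 v q)
    (hred : IsReducedWord w)
    (hp : ∀ a w', w = a :: w' → ∀ x, (p, a, x) ∉ M.E)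
    (hq : ∀ b w', w = w' ++ [b] → ∀ x, (q, Ltr.inv b, x) ∉ M.E) (m : ℕ) :
    ∀ (w1 w2 w3 : List (Ltr A)), w1.length = m → w = w1 ++ w2 ++ w3 → w2 ≠ [] →
    SwapGoal L (FreeGroup.mk u * FreeGroup.mk w * (FreeGroup.mk v)⁻¹) w.length
      ((FreeGroup.mk u * FreeGroup.mk w1) * FreeGroup.mk (wordInv w2) *
        (FreeGroup.mk u * FreeGroup.mk w1)⁻¹) := by
  induction m with
  | zero =>
    intro w1 w2 w3 hl hw h2
    rw [List.length_eq_zero_iff] at hl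
    subst hw
    exact swap_c0 hf hM hu1 hv1 hu hv w1 w2 w3 h2 hp hq (Or.inl hl)
  | succ m ih =>
    intro w1 w2 w3 hl hw h2
    by_cases hcan : ∃ s a t, w1 = s ++ [a] ∧ w3 = Ltr.inv a :: t
    · obtain ⟨s, a, t, rfl, rfl⟩ := hcan
      have := ih s ([a] ++ w2 ++ [Ltr.inv a]) t (by simpa using hl) (by simp [hw]) (by simp)
      convert this using 1
      have ha : FreeGroup.mk [Ltr.inv a] = (FreeGroup.mk [a])⁻¹ := mk_wordInv [a]
      simp only [mk_wordInv, ← FreeGroup.mul_mk, ha]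
      group
    · subst hw
      refine swap_c0 hf hM hu1 hv1 hu hv w1 w2 w3 h2 hp hq ?_
      by_cases h1 : w1 = []
      · exact Or.inl h1
      by_cases h3 : w3 = []
      · exact Or.inr (Or.inl h3)
      right; right
      cases w3 with
      | nil => exact absurd rfl h3
      | cons b t =>
      rcases List.eq_nil_or_concat w1 with rfl | ⟨s, a, rfl⟩
      · exact absurd rfl h1
      rw [List.concat_eq_append] at *
      refine reduced_append_cons (reduced_infix_word hred ⟨[], w2 ++ b :: t, by simp⟩)
        (reduced_infix_word hred ⟨s ++ [a] ++ w2, [], by simp⟩) ?_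
      rintro rfl
      exact hcan ⟨s, a, t, rfl, rfl⟩

theorem swap_b {M : Autom A} {L : Subgroup (FreeGroup A)} (hf : Finite M.Q)
    (hM : M.Represents L) {u v w1 w2 : List (Ltr A)} {y : FreeGroup A}
    (hu : FreeGroup.mk u ∈ PP L) (hv : FreeGroup.mk v ∈ PP L) (hy : y ∈ PP L) (h2 : w2 ≠ []) :
    SwapGoal L (FreeGroup.mk u * FreeGroup.mk (w1 ++ w2) * (FreeGroup.mk v)⁻¹) (w1 ++ w2).length
      (FreeGroup.mk u * FreeGroup.mk w1 * y⁻¹) := by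
  have hfin : FinRep L := ⟨M, hf, hM⟩
  have hl2 : 0 < w2.length := List.length_pos_iff.2 h2
  set g1 := FreeGroup.mk u * FreeGroup.mk w1 * y⁻¹ with hg1
  set g2 := y * FreeGroup.mk w2 * (FreeGroup.mk v)⁻¹ with hg2
  have hmono := PP_mono (FinRep_sup hfin g1) (le_sup_left (a := L))
  have e : FreeGroup.mk u * FreeGroup.mk (w1 ++ w2) * (FreeGroup.mk v)⁻¹ = g1 * g2 := by
    rw [hg1, hg2]
    simp only [← FreeGroup.mul_mk]
    group
  have hc1 : cost L g1 ≤ w1.length := cost_le ⟨_, hu, _, hy, w1, rfl, rfl⟩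
  have hc2 : cost (L ⊔ Subgroup.zpowers g1) g2 ≤ w2.length :=
    cost_le ⟨_, hmono hy, _, hmono hv, w2, rfl, rfl⟩
  refine ⟨g1, g2, ?_, ?_, ?_⟩
  · rw [e]
    apply le_antisymm
    · refine sup2_le (le_sup2 _ _) (mem_right _ _) ?_
      have := mul_mem (inv_mem (mem_right (L := L) (g1 * g2) g1)) (mem_left (L := L) (g1 * g2) g1)
      rwa [inv_mul_cancel_left] at this
    · exact sup2_le (le_sup2 _ _) (mul_mem (mem_left _ _) (mem_right _ _)) (mem_left _ _)
  · simp only [List.length_append]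
    omega
  · simp only [List.length_append]
    omega

theorem swap_a {L : Subgroup (FreeGroup A)} (hfin : FinRep L) {g x y : FreeGroup A}
    (hc : 0 < cost L g)
    (hx : x ∈ PP L) (hy : y ∈ PP L) : SwapGoal L g (cost L g) (x * y⁻¹) := by
  have h0 : cost L (x * y⁻¹) ≤ 0 := cost_le ⟨x, hx, y, hy, [], rfl, by
    change _ = x * 1 * y⁻¹
    rw [mul_one]⟩
  have hmono := PP_mono (FinRep_sup hfin (x * y⁻¹)) (le_sup_left (a := L))
  have h1 : cost (L ⊔ Subgroup.zpowers (x * y⁻¹)) g ≤ cost L g := by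
    obtain ⟨a, ha, b, hb, h⟩ := cost_spec hfin g
    exact cost_le ⟨a, hmono ha, b, hmono hb, h⟩
  exact ⟨x * y⁻¹, g, sup_right_comm _ _ _, by omega, by omega⟩

theorem swap {M : Autom A} {L : Subgroup (FreeGroup A)} (hf : Finite M.Q)
    (hM : M.Represents L) {g k : FreeGroup A} (hc : 0 < cost L g)
    (hk : k ∉ L ⊔ Subgroup.zpowers g) (hk0 : cost (L ⊔ Subgroup.zpowers g) k = 0) :
    SwapGoal L g (cost L g) k := by
  have hfin : FinRep L := ⟨M, hf, hM⟩
  obtain ⟨u, v, w, p, q, hu1, hv1, hw1, hu, hv, hl, hg, hp, hq⟩ := minimal_data hf hM g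
  have hw : w ≠ [] := by
    rintro rfl
    simp at hl
    omega
  have hu' : FreeGroup.mk u ∈ PP L := ⟨M, hM, u, p, hu, rfl⟩
  have hv' : FreeGroup.mk v ∈ PP L := ⟨M, hM, v, q, hv, rfl⟩
  obtain ⟨N, -, hN1, hN2, hN3⟩ := exists_expstep hf hM hw hu hv
  rw [← hg] at hN2 hN3
  have hgm : g ∈ L ⊔ Subgroup.zpowers g := le_sup_right (a := L) (Subgroup.mem_zpowers g)
  have nf : ∀ x ∈ Pz N, ∃ h ∈ L ⊔ Subgroup.zpowers g, ∃ x0, x = h * x0 ∧ (x0 ∈ PP L ∨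
      ∃ w1 w2, w = w1 ++ w2 ∧ w2 ≠ [] ∧ x0 = FreeGroup.mk u * FreeGroup.mk w1) := by
    intro x hx
    obtain ⟨h, hh, ⟨y, hy, e⟩ | ⟨i, e⟩⟩ := hN3 x hx
    · exact ⟨h, hh, y, e, Or.inl ⟨M, hM, hy⟩⟩
    · by_cases hi : i < w.length
      · exact ⟨h, hh, _, e, Or.inr ⟨w.take i, w.drop i, (List.take_append_drop i w).symm,
          by simpa using hi, rfl⟩⟩
      · refine ⟨h * g, mul_mem hh hgm, FreeGroup.mk v, ?_, Or.inl hv'⟩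
        rw [e, List.take_of_length_le (by omega), hg]
        group
  have hkc := cost_spec (FinRep_sup hfin g) k
  rw [hk0] at hkc
  obtain ⟨x, hx, y, hy, z, hz, hkk⟩ := hkc
  rw [List.length_eq_zero_iff] at hz
  subst hz
  rw [PP_eq hN2] at hx hy
  obtain ⟨h, hh, x0, rfl, hx0⟩ := nf x hx
  obtain ⟨h', hh', y0, rfl, hy0⟩ := nf y hy
  have hkk' : k = h * (x0 * y0⁻¹) * h'⁻¹ := by
    rw [hkk]
    change h * x0 * 1 * _ = _
    group
  have hL : ∀ z ∈ L ⊔ Subgroup.zpowers g, ∀ r,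
      z ∈ L ⊔ Subgroup.zpowers g ⊔ Subgroup.zpowers r := fun z hz r => le_sup_left (b := Subgroup.zpowers r) hz
  have hne : x0 * y0⁻¹ ≠ 1 := by
    intro e
    apply hk
    rw [hkk', e, mul_one]
    exact mul_mem hh (inv_mem hh')
  suffices hs : SwapGoal L g (cost L g) (x0 * y0⁻¹) by
    refine hs.congr (le_antisymm ?_ ?_)
    · refine sup2_le (le_sup2 _ _) (mem_left _ _) ?_
      have := mul_mem (mul_mem (inv_mem (hL _ hh k)) (mem_right (L := L) g k)) (hL _ hh' k)
      convert this using 1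
      rw [hkk']
      group
    · refine sup2_le (le_sup2 _ _) (mem_left _ _) ?_
      rw [hkk']
      exact mul_mem (mul_mem (hL _ hh _) (mem_right _ _)) (inv_mem (hL _ hh' _))
  have main : ∀ w1 w2 w3 : List (Ltr A), w = w1 ++ w2 ++ w3 → w2 ≠ [] →
      SwapGoal L g (cost L g) ((FreeGroup.mk u * FreeGroup.mk w1) *
        (FreeGroup.mk u * FreeGroup.mk (w1 ++ w2))⁻¹) := by
    intro w1 w2 w3 e h2
    have := swap_c hf hM hu1 hv1 hu hv hw1 hp hq _ w1 w2 w3 rfl e h2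
    rw [← hg, hl] at this
    convert this using 1
    rw [mk_wordInv, ← FreeGroup.mul_mk]
    group
  rcases hx0 with hx0 | ⟨w1, w2, hw12, hw2, hx0⟩
  · rcases hy0 with hy0 | ⟨w1, w2, hw12, hw2, hy0⟩
    · exact swap_a hfin hc hx0 hy0
    · apply SwapGoal.inv
      have := swap_b (w1 := w1) hf hM hu' hv' hx0 hw2
      rw [← hw12, ← hg, hl] at this
      rw [hy0]
      simpa using this
  · rcases hy0 with hy0 | ⟨w1', w2', hw12', hw2', hy0⟩
    · have := swap_b (w1 := w1) hf hM hu' hv' hy0 hw2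
      rw [← hw12, ← hg, hl] at this
      rw [hx0]
      exact this
    · have e := hw12.symm.trans hw12'
      rcases List.append_eq_append_iff.1 e with ⟨s, h1, h2⟩ | ⟨s, h1, h2⟩
      · have hs : s ≠ [] := by
          rintro rfl
          apply hne
          rw [hx0, hy0, h1, List.append_nil, mul_inv_cancel]
        have := main w1 s w2' (by rw [hw12', h1]) hs
        rw [hx0, hy0, h1]
        exact this
      · have hs : s ≠ [] := by
          rintro rfl
          apply hne
          rw [hx0, hy0, h1, List.append_nil, mul_inv_cancel]
        have := main w1' s w2 (by rw [hw12, h1]) hs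
        apply SwapGoal.inv
        rw [hx0, hy0, h1, mul_inv_rev, inv_inv]
        exact this

end FFP

namespace FFP
open Autom
variable {A : Type}

def gen : Subgroup (FreeGroup A) → List (FreeGroup A) → Subgroup (FreeGroup A)
  | L, [] => L
  | L, g :: gs => gen (L ⊔ Subgroup.zpowers g) gs

theorem gen_eq (L : Subgroup (FreeGroup A)) (gs : List (FreeGroup A)) :
    gen L gs = L ⊔ Subgroup.closure {g | g ∈ gs} := by
  induction gs generalizing L with
  | nil => simp [gen]
  | cons g gs ih =>
    rw [gen, ih, sup_assoc, Subgroup.zpowers_eq_closure, ← Subgroup.closure_union]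
    congr 2
    ext x
    simp

theorem FinRep_gen {L : Subgroup (FreeGroup A)} (h : FinRep L) (gs : List (FreeGroup A)) :
    FinRep (gen L gs) := by
  induction gs generalizing L with
  | nil => exact h
  | cons g gs ih => exact ih (FinRep_sup h g)

theorem FinRep_of_fg {L : Subgroup (FreeGroup A)} (h : L.FG) : FinRep L := by
  obtain ⟨S, hS⟩ := h
  have := FinRep_gen (FinRep_bot (A := A)) S.toList
  rw [gen_eq, bot_sup_eq] at this
  have e : {g | g ∈ S.toList} = (S : Set (FreeGroup A)) := by ext; simp
  rwa [e, hS] at this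

noncomputable def Wt : Subgroup (FreeGroup A) → List (FreeGroup A) → ℕ
  | _, [] => 0
  | L, g :: gs => (gs.length + 1) * cost L g + Wt (L ⊔ Subgroup.zpowers g) gs

theorem build (gs : List (FreeGroup A)) : ∀ (L : Subgroup (FreeGroup A)) (M : Autom A),
    Finite M.Q → M.Represents L →
    (∀ gs', gen L gs' = gen L gs → gs.length ≤ gs'.length) →
    (∀ gs', gs'.length = gs.length → gen L gs' = gen L gs → Wt L gs ≤ Wt L gs') →
    ∃ d' ≤ gs.length, ∃ f : ℕ → Autom A, f 0 = M ∧ (f gs.length).Represents (gen L gs) ∧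
      (∀ i < d', IStepAny (f i) (f (i + 1))) ∧
      (∀ i, d' ≤ i → i < gs.length → REStepAny (f i) (f (i + 1))) ∧
      (∀ g t, gs = g :: t → 0 < cost L g → d' = 0) := by
  induction gs with
  | nil =>
    intro L M hf hM _ _
    exact ⟨0, le_rfl, fun _ => M, rfl, hM, fun i hi => absurd hi (by omega),
      fun i _ hi => absurd hi (by simp), fun _ _ _ _ => rfl⟩
  | cons g t ih =>
    intro L M hf hM hS hW
    have hg : g ∉ L := by
      intro hg
      have : L ⊔ Subgroup.zpowers g = L := sup_eq_left.2 (by rwa [Subgroup.zpowers_le])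
      have := hS t (by rw [gen, this])
      simp at this
    have hS' : ∀ gs', gen (L ⊔ Subgroup.zpowers g) gs' = gen (L ⊔ Subgroup.zpowers g) t →
        t.length ≤ gs'.length := by
      intro gs' h
      have := hS (g :: gs') h
      simpa using this
    have hW' : ∀ gs', gs'.length = t.length →
        gen (L ⊔ Subgroup.zpowers g) gs' = gen (L ⊔ Subgroup.zpowers g) t →
        Wt (L ⊔ Subgroup.zpowers g) t ≤ Wt (L ⊔ Subgroup.zpowers g) gs' := by
      intro gs' hl h
      have := hW (g :: gs') (by simpa using hl) h
      rw [Wt, Wt, hl] at this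
      omega
    by_cases hc : cost L g = 0
    · obtain ⟨N, h1, h2, h3⟩ := istep_of_cost hf hM hg hc
      obtain ⟨d', hd', f, f0, f1, f2, f3, -⟩ := ih _ N h2 h3 hS' hW'
      refine ⟨d' + 1, by simpa using hd', fun i => Nat.casesOn i M f, rfl, f1, ?_, ?_, ?_⟩
      · intro i hi
        cases i with
        | zero => simpa [f0] using h1
        | succ i => exact f2 i (by omega)
      · intro i hi hi'
        cases i with
        | zero => omega
        | succ i => exact f3 i (by omega) (by simpa using hi')
      · rintro g' t' e hc'
        cases e
        omega
    · have hc : 0 < cost L g := Nat.pos_of_ne_zero hc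
      obtain ⟨N, h1, h2, h3⟩ := restep_of_cost hf hM hc
      obtain ⟨d', hd', f, f0, f1, f2, f3, f4⟩ := ih _ N h2 h3 hS' hW'
      have hd0 : d' = 0 := by
        cases t with
        | nil => simpa using hd'
        | cons k t =>
          refine f4 k t rfl ?_
          by_contra hk0
          have hk0 : cost (L ⊔ Subgroup.zpowers g) k = 0 := by omega
          have hk : k ∉ L ⊔ Subgroup.zpowers g := by
            intro hk
            have : L ⊔ Subgroup.zpowers g ⊔ Subgroup.zpowers k = L ⊔ Subgroup.zpowers g :=
              sup_eq_left.2 (by rwa [Subgroup.zpowers_le])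
            have := hS' t (by rw [gen, this])
            simp at this
          obtain ⟨g1, g2, e, c1, c2⟩ := swap hf hM hc hk hk0
          have := hW (g1 :: g2 :: t) (by simp) (by simp only [gen]; rw [e])
          simp only [Wt, List.length_cons] at this
          rw [e, hk0] at this
          have h5 : (t.length + 1) * (cost L g1 + cost (L ⊔ Subgroup.zpowers g1) g2) ≤
            (t.length + 1) * cost L g := Nat.mul_le_mul_left _ c1
          nlinarith
      subst hd0
      refine ⟨0, by simp, fun i => Nat.casesOn i M f, rfl, f1, fun i hi => absurd hi (by omega), ?_,
        fun _ _ _ _ => rfl⟩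
      intro i hi hi'
      cases i with
      | zero => simpa [f0] using h1
      | succ i => exact f3 i (by omega) (by simpa using hi')

theorem exists_min (L : Subgroup (FreeGroup A)) (gs : List (FreeGroup A)) :
    ∃ gs0, gs0.length = gs.length ∧ gen L gs0 = gen L gs ∧
      ∀ gs', gs'.length = gs0.length → gen L gs' = gen L gs0 → Wt L gs0 ≤ Wt L gs' := by
  classical
  have hex : ∃ n, ∃ gs0, gs0.length = gs.length ∧ gen L gs0 = gen L gs ∧ Wt L gs0 = n :=
    ⟨_, gs, rfl, rfl, rfl⟩
  obtain ⟨gs0, h1, h2, h3⟩ := Nat.find_spec hex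
  refine ⟨gs0, h1, h2, fun gs' h4 h5 => ?_⟩
  rw [h3]
  exact Nat.find_min' hex ⟨gs', h4.trans h1, h5.trans h2, rfl⟩

/-- Every step adds one generator. -/
theorem istep_gen {M N : Autom A} {L : Subgroup (FreeGroup A)} (hM : Rep0 M L)
    (h : IStepAny M N) : ∃ g, Rep0 N (L ⊔ Subgroup.zpowers g) := by
  obtain ⟨p, q, -, N', N'', h1, h2, h3⟩ := h
  obtain ⟨u, hu⟩ := hM.conn p
  obtain ⟨v, hv⟩ := hM.conn q
  exact ⟨_, iso_rep (reduction_rep (ident_rep hM h1 hu hv) h2).1 h3⟩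

theorem restep_gen {M N : Autom A} {L : Subgroup (FreeGroup A)} (hM : Rep0 M L)
    (h : REStepAny M N) : ∃ g, Rep0 N (L ⊔ Subgroup.zpowers g) := by
  obtain ⟨p, w, q, -, ⟨N', N'', h1, h2, h3⟩, -⟩ := h
  obtain ⟨u, hu⟩ := hM.conn p
  obtain ⟨v, hv⟩ := hM.conn q
  exact ⟨_, iso_rep (reduction_rep (exp_rep hM h1 hu hv).1 h2).1 h3⟩

theorem steps_gen {f : ℕ → Autom A} {L : Subgroup (FreeGroup A)} (h0 : Rep0 (f 0) L) (d : ℕ)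
    (h : ∀ i < d, IStepAny (f i) (f (i + 1)) ∨ REStepAny (f i) (f (i + 1))) :
    ∃ gs : List (FreeGroup A), gs.length = d ∧ Rep0 (f d) (L ⊔ Subgroup.closure {g | g ∈ gs}) := by
  induction d with
  | zero => exact ⟨[], rfl, by simpa using h0⟩
  | succ d ih =>
    obtain ⟨gs, hl, hr⟩ := ih fun i hi => h i (by omega)
    obtain ⟨g, hg⟩ : ∃ g, Rep0 (f (d + 1)) (L ⊔ Subgroup.closure {g | g ∈ gs} ⊔ Subgroup.zpowers g) := by
      rcases h d (by omega) with h | h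
      · exact istep_gen hr h
      · exact restep_gen hr h
    refine ⟨g :: gs, by simp [hl], ?_⟩
    have e : L ⊔ Subgroup.closure {x | x ∈ g :: gs} =
        L ⊔ Subgroup.closure {g | g ∈ gs} ⊔ Subgroup.zpowers g := by
      rw [sup_assoc, Subgroup.zpowers_eq_closure, ← Subgroup.closure_union]
      congr 2
      ext x
      simp [or_comm]
    rw [e]
    exact hg

end FFP

namespace FFP
open Autom
variable {A : Type}

/-! ### Rank facts -/

section Rank

variable {G : Type} [Group G]

theorem lift_range_val (S : Set G) :
    (FreeGroup.lift (Subtype.val : S → G) : FreeGroup S →* G).range = Subgroup.closure S := by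
  rw [FreeGroup.range_lift_eq_closure, Subtype.range_val]

theorem exists_pre {S T : Set G} {L : Subgroup G} (hS : IsFreeBasis S L)
    (hT : Subgroup.closure T = L) :
    ∃ e : T → FreeGroup S, (∀ t, FreeGroup.lift (Subtype.val : S → G) (e t) = t) ∧
      Subgroup.closure (Set.range e) = ⊤ := by
  have : ∀ t : T, ∃ x : FreeGroup S, FreeGroup.lift (Subtype.val : S → G) x = t := by
    intro t
    have h : (t : G) ∈ (FreeGroup.lift (Subtype.val : S → G) : FreeGroup S →* G).range := by
      rw [lift_range_val, hS.1, ← hT]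
      exact Subgroup.subset_closure t.2
    exact h
  choose e he using this
  refine ⟨e, he, ?_⟩
  apply Subgroup.map_injective hS.2
  rw [MonoidHom.map_closure, ← MonoidHom.range_eq_map, lift_range_val, hS.1, ← hT, ← Set.range_comp]
  congr 1
  have : (FreeGroup.lift (Subtype.val : S → G)) ∘ e = Subtype.val := funext he
  rw [this, Subtype.range_val]

theorem hom_inj {S T : Set G} (e : T → FreeGroup S) (he : Subgroup.closure (Set.range e) = ⊤)
    (P : Type) [Group P] :
    Injective (fun (f : S → P) (t : T) => FreeGroup.lift f (e t)) := by
  intro f f' h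
  apply FreeGroup.lift.injective
  apply MonoidHom.eq_of_eqOn_dense he
  rintro _ ⟨t, rfl⟩
  exact congrFun h t

theorem basis_le {S T : Set G} {L : Subgroup G} (hS : IsFreeBasis S L)
    (hT : Subgroup.closure T = L) (hf : T.Finite) : S.Finite ∧ S.ncard ≤ T.ncard := by
  obtain ⟨e, -, he⟩ := exists_pre hS hT
  have hinj := hom_inj e he (Multiplicative (ZMod 2))
  have : Finite T := hf
  have hfin : Finite (S → Multiplicative (ZMod 2)) := Finite.of_injective _ hinj
  have hSf : Finite S := by
    classical
    have hfin2 : Finite (S → ZMod 2) := hfin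
    refine Finite.of_injective (fun s : S => (Pi.single s (1 : ZMod 2) : S → ZMod 2)) ?_
    intro s s' h
    by_contra hne
    have := congrFun h s
    simp [Pi.single_apply, hne] at this
  refine ⟨hSf, ?_⟩
  have hc := Nat.card_le_card_of_injective _ hinj
  rw [Nat.card_fun, Nat.card_fun] at hc
  have h2 : Nat.card (Multiplicative (ZMod 2)) = 2 := by
    rw [Nat.card_congr Multiplicative.toAdd, Nat.card_zmod]
  rw [h2] at hc
  exact (Nat.pow_le_pow_iff_right (by norm_num)).1 hc

end Rank

theorem resid_finite {α : Type} {w : FreeGroup α} (hw : w ≠ 1) :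
    ∃ (n : ℕ) (χ : α → Equiv.Perm (Fin n)), FreeGroup.lift χ w ≠ 1 := by
  classical
  obtain ⟨l, hl, rfl⟩ : ∃ l, FreeGroup.IsReduced l ∧ FreeGroup.mk l = w :=
    ⟨w.toWord, FreeGroup.isReduced_toWord, FreeGroup.mk_toWord⟩
  rw [← isReducedWord_iff] at hl
  have hno : ∀ i a b, l[i]? = some (a, b) → l[i+1]? = some (a, !b) → False := by
    intro i a b h1 h2
    obtain ⟨k1, e1⟩ := List.getElem?_eq_some_iff.1 h1
    obtain ⟨k2, e2⟩ := List.getElem?_eq_some_iff.1 h2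
    apply hl (l.take i) (l.drop (i + 2)) a b
    rw [← e1, ← e2, List.getElem_cons_drop, List.getElem_cons_drop, List.take_append_drop]
  set n := l.length with hn
  have hex : ∀ a : α, ∃ σ : Equiv.Perm (Fin (n + 1)), ∀ (i : ℕ) (h : i < n),
      (l[i]? = some (a, true) → σ ⟨i + 1, by omega⟩ = ⟨i, by omega⟩) ∧
      (l[i]? = some (a, false) → σ ⟨i, by omega⟩ = ⟨i + 1, by omega⟩) := by
    intro a
    let s : Set (Fin (n + 1)) := {j | (∃ i, (j : ℕ) = i + 1 ∧ l[i]? = some (a, true)) ∨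
      l[(j : ℕ)]? = some (a, false)}
    let f : Fin (n + 1) → Fin (n + 1) := fun j =>
      if (∃ i, (j : ℕ) = i + 1 ∧ l[i]? = some (a, true)) then ⟨(j : ℕ) - 1, by omega⟩ else
        if h : (j : ℕ) < n then ⟨j + 1, by omega⟩ else j
    have f1 : ∀ (j : Fin (n + 1)) i, (j : ℕ) = i + 1 → l[i]? = some (a, true) → (f j : ℕ) = i := by
      intro j i h1 h2
      simp only [f]
      rw [if_pos ⟨i, h1, h2⟩]
      simp [h1]
    have f2 : ∀ (j : Fin (n + 1)), l[(j : ℕ)]? = some (a, false) → (f j : ℕ) = j + 1 := by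
      intro j h2
      have hj : (j : ℕ) < n := (List.getElem?_eq_some_iff.1 h2).1
      simp only [f]
      rw [if_neg, dif_pos hj]
      rintro ⟨i, h3, h4⟩
      rw [h3] at h2
      exact hno i a true h4 h2
    have hinj : Set.InjOn f s := by
      intro x hx y hy e
      have e := congrArg Fin.val e
      rcases hx with ⟨i, h1, h2⟩ | h2 <;> rcases hy with ⟨j, h3, h4⟩ | h4
      · rw [f1 x i h1 h2, f1 y j h3 h4] at e
        exact Fin.ext (by omega)
      · rw [f1 x i h1 h2, f2 y h4] at e
        rw [e] at h2
        exact (hno _ a false h4 h2).elim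
      · rw [f2 x h2, f1 y j h3 h4] at e
        rw [← e] at h4
        exact (hno _ a false h2 h4).elim
      · rw [f2 x h2, f2 y h4] at e
        exact Fin.ext (by omega)
    obtain ⟨g, hg⟩ := Set.MapsTo.exists_equiv_extend_of_card_eq (t := Finset.univ) (by simp)
      (s := s) (f := f) (fun _ _ => by simp) hinj
    refine ⟨g.trans (Equiv.subtypeUnivEquiv (by simp)), fun i h => ⟨fun h1 => ?_, fun h1 => ?_⟩⟩
    · have := hg ⟨i + 1, by omega⟩ (Or.inl ⟨i, rfl, h1⟩)
      change (g _ : Fin (n + 1)) = _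
      rw [this]
      exact Fin.ext (f1 _ i rfl h1)
    · have := hg ⟨i, by omega⟩ (Or.inr h1)
      change (g _ : Fin (n + 1)) = _
      rw [this]
      exact Fin.ext (f2 _ h1)
  choose χ hχ using hex
  refine ⟨n + 1, χ, ?_⟩
  have key : ∀ m k, k + m = n → (FreeGroup.lift χ (FreeGroup.mk (l.drop k))) (Fin.last n) =
      ⟨n - m, by omega⟩ := by
    intro m
    induction m with
    | zero =>
      intro k hk
      rw [List.drop_of_length_le (by omega)]
      change (FreeGroup.lift χ 1) _ = _
      rw [map_one]
      rfl
    | succ m ih =>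
      intro k hk
      have hkl : k < l.length := by omega
      rw [← List.getElem_cons_drop hkl]
      have e : FreeGroup.mk (l[k] :: l.drop (k + 1)) = FreeGroup.mk [l[k]] * FreeGroup.mk (l.drop (k+1)) := by
        rw [FreeGroup.mul_mk]; rfl
      rw [e, map_mul, Equiv.Perm.mul_apply, ih (k + 1) (by omega)]
      rcases hlk : l[k] with ⟨a, b⟩
      have hlk' : l[k]? = some (a, b) := by rw [← hlk]; exact List.getElem?_eq_getElem hkl
      have hk1 : (⟨n - m, by omega⟩ : Fin (n + 1)) = ⟨k + 1, by omega⟩ := Fin.ext (by simp; omega)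
      have hk2 : (⟨n - (m + 1), by omega⟩ : Fin (n + 1)) = ⟨k, by omega⟩ := Fin.ext (by simp; omega)
      rw [hk1, hk2]
      cases b with
      | true =>
        have := (hχ a k (by omega)).1 hlk'
        simpa using this
      | false =>
        have := (hχ a k (by omega)).2 hlk'
        simp only [FreeGroup.lift_mk, List.map_cons, List.map_nil, List.prod_cons, List.prod_nil,
          mul_one, cond_false]
        rw [Equiv.Perm.inv_eq_iff_eq]
        exact this.symm
  intro h1
  have := key n 0 (by omega)
  rw [List.drop_zero, h1] at this
  have h0 : n ≠ 0 := by
    intro h0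
    have : l = [] := List.length_eq_zero_iff.1 h0
    subst this
    exact hw rfl
  have := congrArg Fin.val this
  simp at this
  exact h0 this

theorem hopf {G : Type} [Group G] {S T : Set G} {L : Subgroup G} (hS : IsFreeBasis S L)
    (hT : Subgroup.closure T = L) (hf : T.Finite) (hc : T.ncard ≤ S.ncard) : IsFreeBasis T L := by
  refine ⟨hT, ?_⟩
  rw [injective_iff_map_eq_one]
  intro w hw
  by_contra hne
  obtain ⟨n, χ, hχ⟩ := resid_finite hne
  obtain ⟨e, he1, he2⟩ := exists_pre hS hT
  have hinj := hom_inj e he2 (Equiv.Perm (Fin n))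
  obtain ⟨hSf, hle⟩ := basis_le hS hT hf
  have : Finite S := hSf
  have : Finite T := hf
  have hcard : Nat.card (S → Equiv.Perm (Fin n)) = Nat.card (T → Equiv.Perm (Fin n)) := by
    rw [Nat.card_fun, Nat.card_fun]
    congr 1
    exact le_antisymm hle hc
  have hbij := (Nat.bijective_iff_injective_and_card _).2 ⟨hinj, hcard⟩
  obtain ⟨f, hf⟩ := hbij.2 χ
  apply hχ
  have h1 : FreeGroup.lift χ = (FreeGroup.lift f).comp (FreeGroup.lift e) := by
    apply FreeGroup.ext_hom
    intro t
    simp [← hf]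
  have h2 : FreeGroup.lift (Subtype.val : T → G) =
      (FreeGroup.lift (Subtype.val : S → G)).comp (FreeGroup.lift e) := by
    apply FreeGroup.ext_hom
    intro t
    simp [he1]
  rw [h2, MonoidHom.comp_apply] at hw
  have := (injective_iff_map_eq_one _).1 hS.2 _ hw
  rw [h1, MonoidHom.comp_apply, this, map_one]

theorem basis_of_lift {G ι : Type} [Group G] (b : ι → G) (h : Injective (FreeGroup.lift b)) :
    IsFreeBasis (Set.range b) (FreeGroup.lift b).range := by
  refine ⟨(FreeGroup.range_lift_eq_closure).symm, ?_⟩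
  have hb : Injective b := by
    intro i j e
    apply FreeGroup.of_injective
    apply h
    simpa using e
  let E := Equiv.ofInjective b hb
  have : FreeGroup.lift (Subtype.val : Set.range b → G) =
      (FreeGroup.lift b).comp (FreeGroup.freeGroupCongr E.symm).toMonoidHom := by
    apply FreeGroup.ext_hom
    intro t
    simp [E]
    exact (Equiv.apply_ofInjective_symm hb t).symm
  rw [this]
  exact h.comp (FreeGroup.freeGroupCongr E.symm).injective

theorem exists_basis (L : Subgroup (FreeGroup A)) : ∃ S, IsFreeBasis S L := by
  let φ := IsFreeGroup.mulEquiv L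
  let b : IsFreeGroup.Generators L → FreeGroup A := fun i => (φ (FreeGroup.of i) : FreeGroup A)
  have hb : FreeGroup.lift b = L.subtype.comp φ.toMonoidHom := by
    apply FreeGroup.ext_hom
    intro t
    simp [b]
  have := basis_of_lift b (by
    rw [hb]
    exact L.subtype_injective.comp φ.injective)
  refine ⟨_, this.1.trans ?_, this.2⟩
  rw [hb, MonoidHom.range_comp]
  have : φ.toMonoidHom.range = ⊤ := MonoidHom.range_eq_top.2 φ.surjective
  rw [this, ← MonoidHom.range_eq_map, L.range_subtype]

theorem rk_eq {L : Subgroup (FreeGroup A)} (hL : L.FG) {S : Set (FreeGroup A)}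
    (hS : IsFreeBasis S L) : S.Finite ∧ rk L = S.ncard := by
  have fin : ∀ S, IsFreeBasis S L → S.Finite := by
    intro S hS
    obtain ⟨T, hT⟩ := hL
    exact (basis_le hS hT T.finite_toSet).1
  refine ⟨fin S hS, ?_⟩
  have hne : {n | ∃ S : Set (FreeGroup A), IsFreeBasis S L ∧ S.ncard = n}.Nonempty := ⟨_, S, hS, rfl⟩
  obtain ⟨S', hS', e⟩ := Nat.sInf_mem hne
  change S'.ncard = rk L at e
  rw [← e]
  exact le_antisymm (basis_le hS' hS.1 (fin S hS)).2 (basis_le hS hS'.1 (fin S' hS')).2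

theorem ncard_list_le (gs : List (FreeGroup A)) : ({g | g ∈ gs} : Set (FreeGroup A)).Finite ∧
    ({g | g ∈ gs} : Set (FreeGroup A)).ncard ≤ gs.length := by
  classical
  have e : {g | g ∈ gs} = (gs.toFinset : Set (FreeGroup A)) := by ext; simp
  rw [e, Set.ncard_coe_finset]
  exact ⟨Finset.finite_toSet _, gs.toFinset_card_le⟩

theorem forward (H K : Subgroup (FreeGroup A)) (hHfg : H.FG) (hKfg : K.FG)
    (d : ℕ) (hrank : rk K = rk H + d) (h : FreeFactor H K) :
      ∃ d' ≤ d, ∃ f : ℕ → Autom A,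
        (f 0).Represents H ∧ (f d).Represents K ∧
        (∀ i < d', Autom.IStepAny (f i) (f (i + 1))) ∧
        (∀ i, d' ≤ i → i < d → Autom.REStepAny (f i) (f (i + 1))) := by
  classical
  obtain ⟨B, C, hB, hC, hBC⟩ := h
  obtain ⟨fB, rB⟩ := rk_eq hHfg hB
  obtain ⟨fC, rC⟩ := rk_eq hKfg hC
  have fD : (C \ B).Finite := fC.subset Set.sdiff_subset
  have hl : fD.toFinset.toList.length = d := by
    rw [Finset.length_toList, ← Set.ncard_eq_toFinset_card _ fD]
    have := Set.ncard_sdiff_add_ncard_of_subset hBC fC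
    omega
  have hgen : gen H fD.toFinset.toList = K := by
    rw [gen_eq, ← hB.1, ← Subgroup.closure_union]
    have : B ∪ {g | g ∈ fD.toFinset.toList} = C := by
      ext x
      simp only [Set.mem_union, Set.mem_ofPred_eq, Finset.mem_toList, Set.Finite.mem_toFinset, Set.mem_sdiff]
      constructor
      · rintro (h | h)
        · exact hBC h
        · exact h.1
      · intro h
        by_cases hx : x ∈ B
        · exact Or.inl hx
        · exact Or.inr ⟨h, hx⟩
    rw [this, hC.1]
  obtain ⟨gs, h1, h2, h3⟩ := exists_min H fD.toFinset.toList
  rw [hl] at h1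
  rw [hgen] at h2
  obtain ⟨M, hf, hM⟩ := FinRep_of_fg hHfg
  obtain ⟨d', hd', f, f0, f1, f2, f3, -⟩ := build gs H M hf hM (by
    intro gs' e
    rw [h2, gen_eq, ← hB.1, ← Subgroup.closure_union] at e
    obtain ⟨n1, n2⟩ := ncard_list_le gs'
    have := (basis_le hC e (fB.union n1)).2
    have h4 := Set.ncard_union_le B {g | g ∈ gs'}
    omega) h3
  rw [h1] at hd' f1 f3
  rw [h2] at f1
  exact ⟨d', hd', f, by rw [f0]; exact hM, f1, f2, f3⟩

theorem backward (H K : Subgroup (FreeGroup A)) (hHfg : H.FG) (hKfg : K.FG)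
    (d : ℕ) (hrank : rk K = rk H + d) (f : ℕ → Autom A) (hH : (f 0).Represents H)
    (hK : (f d).Represents K)
    (h : ∀ i < d, IStepAny (f i) (f (i + 1)) ∨ REStepAny (f i) (f (i + 1))) :
    FreeFactor H K := by
  obtain ⟨gs, hl, hr⟩ := steps_gen (Rep0.of_rep hH) d h
  obtain ⟨B, hB⟩ := exists_basis H
  obtain ⟨S, hS⟩ := exists_basis K
  obtain ⟨fB, rB⟩ := rk_eq hHfg hB
  obtain ⟨fS, rS⟩ := rk_eq hKfg hS
  obtain ⟨n1, n2⟩ := ncard_list_le gs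
  have e : Subgroup.closure (B ∪ {g | g ∈ gs}) = K := by
    rw [Subgroup.closure_union, hB.1]
    exact SetLike.coe_injective (hr.lang.symm.trans hK.2.2)
  have h4 := Set.ncard_union_le B {g | g ∈ gs}
  exact ⟨B, _, hB, hopf hS e (fB.union n1) (by omega), Set.subset_union_left⟩

end FFP

/-- Theorem 3.1: with `d = rank K - rank H > 0`, `H ≤ff K` iff `Γ_A(H)` can be
transformed into `Γ_A(K)` by a sequence of `d' ≤ d` i-steps followed by `d - d'`
reduced expansions. -/
theorem free_factor_iff_isteps_then_restpes
    {A : Type} (H K : Subgroup (FreeGroup A)) (hHfg : H.FG) (hKfg : K.FG)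
    (d : ℕ) (hd : 0 < d) (hrank : rk K = rk H + d) :
    FreeFactor H K ↔
      ∃ d' ≤ d, ∃ f : ℕ → Autom A,
        (f 0).Represents H ∧ (f d).Represents K ∧
        (∀ i < d', Autom.IStepAny (f i) (f (i + 1))) ∧
        (∀ i, d' ≤ i → i < d → Autom.REStepAny (f i) (f (i + 1))) := by
  constructor
  · exact FFP.forward H K hHfg hKfg d hrank
  · rintro ⟨d', hd', f, h1, h2, h3, h4⟩
    refine FFP.backward H K hHfg hKfg d hrank f h1 h2 fun i hi => ?_
    by_cases hid : i < d'
    · exact Or.inl (h3 i hid)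
    · exact Or.inr (h4 i (by omega) hi)
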